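/- arXiv:2105.11230 — 4 statements merged into one kernel-verified Lean document; each statement's English description precedes it below -/
import Mathlib

section
/- Let ℓ > 5 be a prime, r ≥ 1, and G a subgroup of GL₂(ℤ/ℓʳℤ). Then PSL₂(ℤ/ℓℤ) ∈ Occ(G) if and only if SL₂(ℤ/ℓʳℤ) ⊆ G. -/
/-- `MemOcc G S` : the non-abelian simple group `S` occurs among the composition
factors of `G`. -/
def MemOcc (G : Type) [Group G] (S : Type) [Group S] : Prop :=
  IsSimpleGroup S ∧ (∃ a b : S, a * b ≠ b * a) ∧
    ∃ (K : Subgroup G) (f : ↥K →* S), Function.Surjective f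

/-- `PSL₂(ℤ/ℓℤ) = SL₂(ℤ/ℓℤ)/{±I}`, realized as the quotient by the center. -/
abbrev PSL2 (ℓ : ℕ) : Type :=
  Matrix.SpecialLinearGroup (Fin 2) (ZMod ℓ) ⧸
    Subgroup.center (Matrix.SpecialLinearGroup (Fin 2) (ZMod ℓ))

/-!
Let `π : R → F` be the reduction modulo `p`. A homomorphism from a subgroup `H` of `GL₂(R)` onto
the perfect simple group `PSL₂(F)` stays onto on `H ∩ SL₂(R)`, the kernel of the determinant, and
kills the normal `p`-subgroup of elements congruent to `1` modulo `p`. Hence the reduction of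
`H ∩ SL₂(R)` has index at most `2` in the perfect group `SL₂(F)`, so it is everything. Serre's
lifting lemma (*Abelian ℓ-adic representations*, IV.3.4, Lemma 3) then gives `H ∩ SL₂(R) = SL₂(R)`:
the `p`-th power of a lift of `1 + u`, with `u² = 0`, is `1 + pu` modulo `p²`; such `u` span the
matrices of trace zero, and `p`-th powers carry `1 + pⁿu` to `1 + pⁿ⁺¹u` modulo `pⁿ⁺²`.
-/

open Function Matrix
open scoped MatrixGroups

local notation "M₂" => Matrix (Fin 2) (Fin 2)

section PrimePowers

variable {A : Type*} [Ring A] {p : ℕ}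

lemma exists_one_add_pow_prime_eq (hp : p.Prime) (y : A) :
    ∃ s : A, (1 + y) ^ p = 1 + p • y + p • (y ^ 2 * s) + y ^ p := by
  obtain ⟨q, rfl⟩ := Nat.exists_eq_add_of_le' hp.two_le
  refine ⟨∑ m ∈ Finset.range q, ((q + 2).choose (m + 2) / (q + 2)) • y ^ m, ?_⟩
  have middle_terms : ∑ m ∈ Finset.range q, y ^ (m + 1 + 1) * ((q + 2).choose (m + 1 + 1) : A) =
      (q + 2) • (y ^ 2 *
        ∑ m ∈ Finset.range q, ((q + 2).choose (m + 2) / (q + 2)) • y ^ m) := by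
    rw [Finset.mul_sum, Finset.smul_sum]
    refine Finset.sum_congr rfl fun m hm ↦ ?_
    have hdvd : q + 2 ∣ (q + 2).choose (m + 2) :=
      hp.dvd_choose_self (by omega) (by have := Finset.mem_range.1 hm; omega)
    rw [mul_smul_comm, smul_smul, Nat.mul_div_cancel' hdvd, ← pow_add, add_comm 2 m,
      nsmul_eq_mul, Nat.cast_comm]
  rw [← middle_terms, add_comm 1 y, (Commute.one_right y).add_pow]
  simp only [one_pow, mul_one, Finset.sum_range_succ, Finset.sum_range_succ' _ (q + 1),
    Finset.sum_range_succ' _ q, Nat.choose_self, Nat.choose_zero_right, Nat.choose_one_right,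
    zero_add, pow_zero, pow_one, Nat.cast_one, nsmul_eq_mul, Nat.cast_comm]
  abel

lemma exists_one_add_add_pow_prime_eq (hp : p.Prime) (h4 : 4 ≤ p) {u : A} (hu : u * u = 0)
    (v : A) : ∃ w : A, (1 + u + p • v) ^ p = 1 + p • u + p ^ 2 • w := by
  set y := u + p • v with hy
  obtain ⟨s, hs⟩ := exists_one_add_pow_prime_eq hp y
  obtain ⟨z, hz⟩ : ∃ z : A, y ^ 2 = p • z := by
    refine ⟨u * v + v * u + p • (v * v), ?_⟩
    simp only [hy, sq, add_mul, mul_add, smul_mul_assoc, mul_smul_comm, hu]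
    module
  have hyp : y ^ p = p ^ 2 • (z * z * y ^ (p - 4)) := by
    calc y ^ p = y ^ 2 * y ^ 2 * y ^ (p - 4) := by
          rw [← pow_add, ← pow_add, Nat.add_sub_cancel' h4]
      _ = p ^ 2 • (z * z * y ^ (p - 4)) := by
          rw [hz, smul_mul_smul_comm, ← sq, smul_mul_assoc]
  refine ⟨v + z * s + z * z * y ^ (p - 4), ?_⟩
  rw [add_assoc 1 u, ← hy, hs, hz, hyp, smul_mul_assoc, hy]
  module

lemma exists_one_add_pow_smul_pow_prime_eq (hp : p.Prime) (h3 : 3 ≤ p) {n : ℕ} (hn : 1 ≤ n)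
    (u v : A) : ∃ w : A, (1 + p ^ n • u + p ^ (n + 1) • v) ^ p =
      1 + p ^ (n + 1) • u + p ^ (n + 2) • w := by
  obtain ⟨m, rfl⟩ := Nat.exists_eq_add_of_le' hn
  set x : A := u + p • v with hx
  set y : A := p ^ (m + 1) • x with hy
  obtain ⟨s, hs⟩ := exists_one_add_pow_prime_eq hp y
  have hyp : y ^ p = p ^ (3 * (m + 1)) • (x ^ 3 * y ^ (p - 3)) := by
    calc y ^ p = y ^ 3 * y ^ (p - 3) := by rw [← pow_add, Nat.add_sub_cancel' h3]
      _ = _ := by rw [hy, smul_pow _ x 3, ← pow_mul, smul_mul_assoc, mul_comm 3]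
  refine ⟨v + p ^ m • (x ^ 2 * s) + p ^ (2 * m) • (x ^ 3 * y ^ (p - 3)), ?_⟩
  rw [show 1 + p ^ (m + 1) • u + p ^ (m + 1 + 1) • v = 1 + y by rw [hy, hx]; module, hs, hyp,
    hy, smul_pow _ x 2, smul_mul_assoc,
    show p • p ^ (m + 1) • x = p ^ (m + 2) • u + p ^ (m + 3) • v by rw [hx]; module]
  module

open Polynomial in
lemma one_add_smul_pow_pow_eq_one {r : ℕ} (hr : (p : A) ^ r = 0) (u : A) :
    (1 + p • u) ^ p ^ r = 1 := by
  obtain ⟨q, hq⟩ : (p : ℤ[X]) ^ (r + 1) ∣ (1 + (p : ℤ[X]) * X) ^ p ^ r - 1 ^ p ^ r :=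
    dvd_sub_pow_of_dvd_sub (by simp) r
  have h := congrArg (Polynomial.aeval u) hq
  simpa [pow_succ, hr, sub_eq_zero] using h

end PrimePowers

section LeadingTerms

variable {A : Type*} [Ring A] {p : ℕ} {M : Submonoid A}

/-- `M` contains an element congruent to `1 + pⁿ u` modulo `pⁿ⁺¹`, i.e. `u` represents an element
of the image of `M ∩ (1 + pⁿ A)` in the `n`-th graded piece of the `p`-adic filtration. For `n = 0`
it says that `1 + u` lifts to `M`. -/
def HasLeadingTerm (p : ℕ) (M : Submonoid A) (n : ℕ) (u : A) : Prop :=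
  ∃ k ∈ M, ∃ v : A, k = 1 + p ^ n • u + p ^ (n + 1) • v

namespace HasLeadingTerm

lemma add {n : ℕ} (hn : 1 ≤ n) {u u' : A} (h : HasLeadingTerm p M n u)
    (h' : HasLeadingTerm p M n u') : HasLeadingTerm p M n (u + u') := by
  obtain ⟨_, hk, v, rfl⟩ := h
  obtain ⟨_, hk', v', rfl⟩ := h'
  obtain ⟨m, rfl⟩ := Nat.exists_eq_add_of_le' hn
  refine ⟨_, mul_mem hk hk', v + v' + p ^ m • ((u + p • v) * (u' + p • v')), ?_⟩
  simp only [add_mul, mul_add, one_mul, mul_one, smul_mul_assoc, mul_smul_comm]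
  module

lemma add_smul {n : ℕ} {u : A} (h : HasLeadingTerm p M n u) (x : A) :
    HasLeadingTerm p M n (u + p • x) := by
  obtain ⟨_, hk, v, rfl⟩ := h
  exact ⟨_, hk, v - x, by module⟩

lemma succ (hp : p.Prime) (h3 : 3 ≤ p) {n : ℕ} (hn : 1 ≤ n) {u : A}
    (h : HasLeadingTerm p M n u) : HasLeadingTerm p M (n + 1) u := by
  obtain ⟨_, hk, v, rfl⟩ := h
  exact ⟨_, pow_mem hk p, exists_one_add_pow_smul_pow_prime_eq hp h3 hn u v⟩

lemma of_mul_self_eq_zero (hp : p.Prime) (h4 : 4 ≤ p) {u : A} (hu : u * u = 0)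
    (h : HasLeadingTerm p M 0 u) {n : ℕ} (hn : 1 ≤ n) : HasLeadingTerm p M n u := by
  induction n, hn using Nat.le_induction with
  | base =>
    obtain ⟨_, hk, v, rfl⟩ := h
    obtain ⟨w, hw⟩ := exists_one_add_add_pow_prime_eq hp h4 hu v
    exact ⟨_, pow_mem hk p, w, by simpa using hw⟩
  | succ n hn ih => exact ih.succ hp (by omega) hn

end HasLeadingTerm

end LeadingTerms

section TwoByTwo

variable {R : Type*} [CommRing R]

lemma mul_self_eq_zero_of_trace_eq_zero_of_det_eq_zero {u : M₂ R}
    (htr : u.trace = 0) (hdet : u.det = 0) : u * u = 0 := by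
  nontriviality R
  simpa [charpoly_fin_two, htr, hdet, sq] using u.aeval_self_charpoly

lemma det_one_add_fin_two (u : M₂ R) :
    (1 + u).det = 1 + u.trace + u.det := by
  simp only [det_fin_two, trace_fin_two, Matrix.add_apply, one_apply_eq,
    one_apply_ne zero_ne_one, one_apply_ne one_ne_zero]
  ring

lemma exists_sum_eq_of_trace_eq_zero {w : M₂ R} (hw : w.trace = 0) :
    ∃ u : Fin 3 → M₂ R,
      (∀ i, (u i).trace = 0 ∧ (u i).det = 0) ∧ w = u 0 + u 1 + u 2 := by
  refine ⟨![!![0, w 0 1 + w 0 0; 0, 0], !![0, 0; w 1 0 - w 0 0, 0],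
    !![w 0 0, -w 0 0; w 0 0, -w 0 0]], fun i ↦ ?_, ?_⟩
  · fin_cases i <;> simp [trace_fin_two, det_fin_two]
  · rw [trace_fin_two] at hw
    ext i j
    fin_cases i <;> fin_cases j <;> simp [eq_neg_of_add_eq_zero_right hw]

lemma HasLeadingTerm.of_dvd_trace {p : ℕ} {M : Submonoid (M₂ R)} {n : ℕ}
    (hn : 1 ≤ n) (hM : ∀ u : M₂ R, u.trace = 0 → u.det = 0 →
      HasLeadingTerm p M n u)
    {w : M₂ R} (hw : (p : R) ∣ w.trace) : HasLeadingTerm p M n w := by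
  obtain ⟨t, ht⟩ := hw
  have trace_eq_zero : (w - p • !![t, 0; 0, 0]).trace = 0 := by
    rw [trace_sub, trace_smul, ht]
    simp [trace_fin_two]
  obtain ⟨u, hu, hsum⟩ := exists_sum_eq_of_trace_eq_zero trace_eq_zero
  have hui i : HasLeadingTerm p M n (u i) := hM _ (hu i).1 (hu i).2
  rw [← sub_add_cancel w (p • !![t, 0; 0, 0]), hsum]
  exact (((hui 0).add hn (hui 1)).add hn (hui 2)).add_smul _

end TwoByTwo

section ReductionModuloPrime

variable {R F ι : Type*} [CommRing R] [Field F] [Fintype ι] [DecidableEq ι] {p : ℕ} {π : R →+* F}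

lemma isUnit_of_map_ne_zero (hnil : IsNilpotent (p : R)) (hπ : Surjective π)
    (hker : RingHom.ker π = Ideal.span {(p : R)}) {a : R} (ha : π a ≠ 0) : IsUnit a := by
  obtain ⟨b, hb⟩ := hπ (π a)⁻¹
  obtain ⟨c, hc⟩ : (p : R) ∣ a * b - 1 := by
    rw [← Ideal.mem_span_singleton, ← hker, RingHom.mem_ker, map_sub, map_mul, hb,
      mul_inv_cancel₀ ha, map_one, sub_self]
  have hab : IsUnit (a * b) := by
    rw [← sub_add_cancel (a * b) 1, hc]
    exact ((Commute.all _ c).isNilpotent_mul_right hnil).isUnit_add_one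
  exact isUnit_of_mul_isUnit_left hab

lemma natCast_dvd_of_pow_mul_eq_zero (hnil : IsNilpotent (p : R)) (hπ : Surjective π)
    (hker : RingHom.ker π = Ideal.span {(p : R)}) {n : ℕ} (hn : (p : R) ^ n ≠ 0) {a : R}
    (ha : (p : R) ^ n * a = 0) : (p : R) ∣ a := by
  rw [← Ideal.mem_span_singleton, ← hker, RingHom.mem_ker]
  by_contra h
  exact hn ((isUnit_of_map_ne_zero hnil hπ hker h).mul_left_eq_zero.1 ha)

lemma natCast_dvd_trace_of_det_one_add_eq_one (hnil : IsNilpotent (p : R)) (hπ : Surjective π)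
    (hker : RingHom.ker π = Ideal.span {(p : R)}) {n : ℕ} (hn : 1 ≤ n) (hpn : (p : R) ^ n ≠ 0)
    {w : Matrix ι ι R} (hw : (1 + p ^ n • w).det = 1) : (p : R) ∣ w.trace := by
  rw [← Nat.cast_smul_eq_nsmul R, det_one_add_smul, Nat.cast_pow] at hw
  set c := (det (1 + (Polynomial.X : Polynomial R) • w.map Polynomial.C)).divX.divX.eval
    ((p : R) ^ n)
  have hann : (p : R) ^ n * (w.trace + (p : R) ^ n * c) = 0 := by linear_combination hw
  exact (dvd_add_left ((dvd_pow_self _ (by omega)).mul_right _)).1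
    (natCast_dvd_of_pow_mul_eq_zero hnil hπ hker hpn hann)

lemma exists_eq_one_add_smul_of_map_eq_one (hker : RingHom.ker π = Ideal.span {(p : R)})
    {x : SpecialLinearGroup ι R} (hx : SpecialLinearGroup.map π x = 1) :
    ∃ v : Matrix ι ι R, (x : Matrix ι ι R) = 1 + p • v := by
  have entry_dvd i j : (p : R) ∣ (x : Matrix ι ι R) i j - (1 : Matrix ι ι R) i j := by
    rw [← Ideal.mem_span_singleton, ← hker, RingHom.mem_ker, map_sub, sub_eq_zero]
    simpa [one_apply, apply_ite π] using congrArg (fun y : SpecialLinearGroup ι F ↦ y i j) hx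
  choose v hv using entry_dvd
  refine ⟨Matrix.of v, ?_⟩
  ext i j
  simp [← hv]

lemma isPGroup_ker_map (hnil : IsNilpotent (p : R))
    (hker : RingHom.ker π = Ideal.span {(p : R)}) :
    IsPGroup p (SpecialLinearGroup.map (n := ι) π).ker := by
  obtain ⟨r, hr⟩ := hnil
  have hr' : (p : Matrix ι ι R) ^ r = 0 := by
    simpa using congrArg (algebraMap R (Matrix ι ι R)) hr
  rintro ⟨x, hx⟩
  obtain ⟨v, hv⟩ := exists_eq_one_add_smul_of_map_eq_one hker hx
  refine ⟨r, Subtype.ext (Subtype.ext ?_)⟩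
  simpa [hv] using one_add_smul_pow_pow_eq_one hr' v

lemma surjective_map_SL2 (hπ : Surjective π) :
    Surjective (SpecialLinearGroup.map (n := Fin 2) π) := by
  intro g
  induction g using SL2.transvection_induction with
  | htransvec i j hij a =>
    obtain ⟨b, rfl⟩ := hπ a
    refine ⟨SpecialLinearGroup.transvection hij b, ?_⟩
    ext k l
    simp [SpecialLinearGroup.transvection_coe, one_apply, single_apply, apply_ite π]
  | hmul x y hx hy =>
    obtain ⟨a, rfl⟩ := hx
    obtain ⟨b, rfl⟩ := hy
    exact ⟨a * b, map_mul _ _ _⟩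

end ReductionModuloPrime

section SerreLifting

variable {R F : Type*} [CommRing R] [Field F] {p : ℕ} {π : R →+* F} {K : Subgroup SL(2, R)}

lemma exists_mem_mul_inv_eq_one_add_smul (hker : RingHom.ker π = Ideal.span {(p : R)})
    (hK : K.map (SpecialLinearGroup.map π) = ⊤) (g : SL(2, R)) :
    ∃ k ∈ K, ∃ v : M₂ R, ((k * g⁻¹ : SL(2, R)) : M₂ R) = 1 + p • v := by
  obtain ⟨k, hk, hkg⟩ : SpecialLinearGroup.map π g ∈ K.map (SpecialLinearGroup.map π) :=
    hK ▸ Subgroup.mem_top _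
  refine ⟨k, hk, exists_eq_one_add_smul_of_map_eq_one hker ?_⟩
  rw [map_mul, map_inv, hkg, mul_inv_cancel]

lemma hasLeadingTerm_of_map_eq_top (hp : p.Prime) (h4 : 4 ≤ p)
    (hker : RingHom.ker π = Ideal.span {(p : R)}) (hK : K.map (SpecialLinearGroup.map π) = ⊤)
    {n : ℕ} (hn : 1 ≤ n) {w : M₂ R} (hw : (p : R) ∣ w.trace) :
    HasLeadingTerm p (K.toSubmonoid.map SpecialLinearGroup.coeMonoidHom) n w := by
  refine .of_dvd_trace hn (fun u htr hdet ↦ ?_) hw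
  let g : SL(2, R) := ⟨1 + u, by rw [det_one_add_fin_two, htr, hdet, add_zero, add_zero]⟩
  obtain ⟨k, hk, v, hv⟩ := exists_mem_mul_inv_eq_one_add_smul hker hK g
  refine .of_mul_self_eq_zero hp h4
    (mul_self_eq_zero_of_trace_eq_zero_of_det_eq_zero htr hdet)
    ⟨SpecialLinearGroup.coeMonoidHom k, Submonoid.mem_map_of_mem _ hk, v * (1 + u), ?_⟩ hn
  calc (k : M₂ R) = ((k * g⁻¹ : SL(2, R)) : M₂ R) * (g : M₂ R) := by
        rw [← Matrix.SpecialLinearGroup.coe_mul, inv_mul_cancel_right]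
    _ = 1 + p ^ 0 • u + p ^ (0 + 1) • (v * (1 + u)) := by
        rw [hv, add_mul, one_mul, smul_mul_assoc, pow_zero, one_smul, zero_add, pow_one]

lemma exists_mem_mul_inv_eq_one_add_pow_smul (hp : p.Prime) (h4 : 4 ≤ p)
    (hnil : IsNilpotent (p : R)) (hπ : Surjective π)
    (hker : RingHom.ker π = Ideal.span {(p : R)}) (hK : K.map (SpecialLinearGroup.map π) = ⊤)
    (g : SL(2, R)) {n : ℕ} (hn : 1 ≤ n) :
    ∃ k ∈ K, ∃ v : M₂ R, ((k * g⁻¹ : SL(2, R)) : M₂ R) = 1 + p ^ n • v := by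
  induction n, hn using Nat.le_induction with
  | base => simpa using exists_mem_mul_inv_eq_one_add_smul hker hK g
  | succ n hn ih =>
    obtain ⟨k, hk, v, hv⟩ := ih
    by_cases hpn : (p : R) ^ n = 0
    · refine ⟨k, hk, 0, ?_⟩
      rw [hv, ← Nat.cast_smul_eq_nsmul R, Nat.cast_pow, hpn, zero_smul, smul_zero]
    have htr : (p : R) ∣ (-v).trace := by
      rw [trace_neg, dvd_neg]
      exact natCast_dvd_trace_of_det_one_add_eq_one hnil hπ hker hn hpn (hv ▸ (k * g⁻¹).det_coe)
    obtain ⟨_, ⟨c, hc, rfl⟩, v', hcv⟩ := hasLeadingTerm_of_map_eq_top hp h4 hker hK hn htr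
    obtain ⟨m, rfl⟩ := Nat.exists_eq_add_of_le' hn
    refine ⟨c * k, mul_mem hc hk, v' + p ^ m • ((-v + p • v') * v), ?_⟩
    calc ((c * k * g⁻¹ : SL(2, R)) : M₂ R) = (c : M₂ R) * ((k * g⁻¹ : SL(2, R)) : M₂ R) := by
          rw [mul_assoc, Matrix.SpecialLinearGroup.coe_mul]
      _ = (1 + p ^ (m + 1) • -v + p ^ (m + 1 + 1) • v') * (1 + p ^ (m + 1) • v) := by
          rw [hv, ← hcv]; rfl
      _ = 1 + p ^ (m + 1 + 1) • (v' + p ^ m • ((-v + p • v') * v)) := by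
          simp only [add_mul, mul_add, one_mul, mul_one, neg_mul, smul_mul_assoc, mul_smul_comm]
          module

theorem eq_top_of_map_eq_top (hp : p.Prime) (h4 : 4 ≤ p) (hnil : IsNilpotent (p : R))
    (hπ : Surjective π) (hker : RingHom.ker π = Ideal.span {(p : R)})
    (hK : K.map (SpecialLinearGroup.map π) = ⊤) : K = ⊤ := by
  refine (Subgroup.eq_top_iff' K).2 fun g ↦ ?_
  obtain ⟨r, hr⟩ := hnil
  obtain ⟨k, hk, v, hv⟩ :=
    exists_mem_mul_inv_eq_one_add_pow_smul hp h4 ⟨r, hr⟩ hπ hker hK g r.succ_pos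
  have hkg : k * g⁻¹ = 1 := Subtype.ext <| by
    rw [hv, ← Nat.cast_smul_eq_nsmul R, Nat.cast_pow, pow_succ, hr, zero_mul, zero_smul, add_zero,
      Matrix.SpecialLinearGroup.coe_one]
  rwa [← mul_inv_eq_one.1 hkg]

end SerreLifting

section PerfectGroups

variable {D S : Type*} [Group D] [Group S]

lemma le_ker_or_map_eq_top [IsSimpleGroup S] {f : D →* S} (hf : Surjective f) (N : Subgroup D)
    [hN : N.Normal] : N ≤ f.ker ∨ N.map f = ⊤ :=
  (hN.map f hf).eq_bot_or_eq_top.imp_left (Subgroup.map_eq_bot_iff N).1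

lemma le_ker_of_isPGroup [Finite S] [IsSimpleGroup S] [Group.IsPerfect S] {p : ℕ} (hp : p.Prime)
    {f : D →* S} (hf : Surjective f) {N : Subgroup D} [N.Normal] (hN : IsPGroup p N) :
    N ≤ f.ker := by
  have := Fact.mk hp
  refine (le_ker_or_map_eq_top hf N).resolve_right fun htop ↦ ?_
  have hS : IsPGroup p S := (htop ▸ hN.map f).of_equiv Subgroup.topEquiv
  exact Group.IsPerfect.not_isNilpotent S hS.isNilpotent

lemma map_ker_eq_top [IsSimpleGroup S] [Group.IsPerfect S] {f : D →* S} (hf : Surjective f)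
    {C : Type*} [CommGroup C] (d : D →* C) : d.ker.map f = ⊤ := by
  refine (le_ker_or_map_eq_top hf d.ker).resolve_left fun hle ↦ ?_
  have hcomm : (commutator D).map f = ⊥ :=
    (Subgroup.map_eq_bot_iff _).2 ((Abelianization.commutator_subset_ker d).trans hle)
  rw [map_commutator_eq, MonoidHom.range_eq_top.2 hf, ← commutator_def,
    Group.IsPerfect.commutator_eq_top] at hcomm
  exact top_ne_bot hcomm

lemma eq_top_of_index_le_two [Finite S] [Group.IsPerfect S] {H : Subgroup S} (hH : H.index ≤ 2) :
    H = ⊤ := by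
  obtain h0 | h1 | h2 : H.index = 0 ∨ H.index = 1 ∨ H.index = 2 := by omega
  · exact absurd h0 Subgroup.index_ne_zero_of_finite
  · exact Subgroup.index_eq_one.1 h1
  · have := Subgroup.normal_of_index_eq_two h2
    have := Fact.mk Nat.prime_two
    have : IsCyclic (S ⧸ H) := isCyclic_of_prime_card (p := 2) h2
    rw [eq_top_iff, ← Group.IsPerfect.commutator_eq_top (G := S)]
    exact Subgroup.Normal.quotient_commutative_iff_commutator_le.1 inferInstance

-- A surjection `D → S ⧸ Z` that factors through the image of `q` bounds the order of that image
-- from below by `|S| / |Z|`.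
lemma surjective_of_ker_le_ker [Finite S] [Group.IsPerfect S] {Z : Subgroup S} [Z.Normal]
    (hZ : Nat.card Z ≤ 2) {q : D →* S} {f : D →* S ⧸ Z} (hf : Surjective f)
    (hker : q.ker ≤ f.ker) : Surjective q := by
  rw [← MonoidHom.range_eq_top]
  refine eq_top_of_index_le_two (Nat.le_of_mul_le_mul_left ?_ (Nat.card_pos (α := q.range)))
  have hdvd : Nat.card (S ⧸ Z) ∣ Nat.card q.range := by
    simpa only [Subgroup.index_ker, MonoidHom.range_eq_top.2 hf, Subgroup.card_top]
      using Subgroup.index_dvd_of_le hker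
  calc Nat.card q.range * q.range.index = Nat.card (S ⧸ Z) * Nat.card Z := by
        rw [Subgroup.card_mul_index, ← Subgroup.card_eq_card_quotient_mul_card_subgroup]
    _ ≤ Nat.card q.range * 2 := Nat.mul_le_mul (Nat.le_of_dvd Nat.card_pos hdvd) hZ

end PerfectGroups

section Occurrence

lemma memOcc_of_injective_of_surjective {G S : Type} {Q : Type*} [Group G] [Group S] [Group Q]
    [IsSimpleGroup S] [Group.IsPerfect S] {i : Q →* G} (hi : Injective i) {f : Q →* S}
    (hf : Surjective f) : MemOcc G S := by
  refine ⟨inferInstance, ?_, i.range, f.comp (MonoidHom.ofInjective hi).symm.toMonoidHom,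
    hf.comp (MonoidHom.ofInjective hi).symm.surjective⟩
  by_contra! hcomm
  exact Group.IsPerfect.not_isMulCommutative S ⟨⟨hcomm⟩⟩

lemma MemOcc.exists_le_surjective {Γ S : Type} [Group Γ] [Group S] {G : Subgroup Γ}
    (h : MemOcc G S) : ∃ H ≤ G, ∃ f : H →* S, Surjective f := by
  obtain ⟨-, -, K, f, hf⟩ := h
  let e := K.equivMapOfInjective G.subtype G.subtype_injective
  exact ⟨K.map G.subtype, Subgroup.map_subtype_le K, f.comp e.symm.toMonoidHom,
    hf.comp e.symm.surjective⟩

lemma surjective_comp_subgroupComap_toGL {R ι S : Type*} [CommRing R] [Fintype ι] [DecidableEq ι]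
    [Group S] [IsSimpleGroup S] [Group.IsPerfect S] {H : Subgroup (GL ι R)} {f : H →* S}
    (hf : Surjective f) : Surjective (f.comp (SpecialLinearGroup.toGL.subgroupComap H)) := by
  intro s
  obtain ⟨⟨g, hg⟩, hdet, rfl⟩ :
      s ∈ (GeneralLinearGroup.det.comp H.subtype).ker.map f := by
    rw [map_ker_eq_top hf]
    exact Subgroup.mem_top s
  let x : SpecialLinearGroup ι R := ⟨g, congrArg Units.val hdet⟩
  have hx : SpecialLinearGroup.toGL x = g := Units.ext rfl
  exact ⟨⟨x, Subgroup.mem_comap.2 (hx ▸ hg)⟩, congrArg f (Subtype.ext hx)⟩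

end Occurrence

section SpecialLinearGroupOfField

variable {F : Type*} [Field F]

lemma card_center_SL2_le_two : Nat.card (Subgroup.center SL(2, F)) ≤ 2 := by
  have : NeZero (Fintype.card (Fin 2)) := ⟨by simp⟩
  rw [Nat.card_congr (SpecialLinearGroup.center_equiv_rootsOfUnity' (0 : Fin 2)).toEquiv]
  exact (card_rootsOfUnity F _).trans (by simp)

lemma exists_ne_zero_sq_ne_one {p : ℕ} (hp : p.Prime) (h5 : 5 ≤ p) (hpF : (p : F) = 0) :
    ∃ a : F, a ≠ 0 ∧ a ^ 2 ≠ 1 := by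
  have natCast_ne_zero {q : ℕ} (hq : q.Prime) (hqp : q < 5) : (q : F) ≠ 0 := by
    have hcop : IsCoprime (q : F) p := ((Nat.coprime_primes hq hp).2 (by omega)).cast
    rw [hpF, isCoprime_zero_right] at hcop
    exact hcop.ne_zero
  refine ⟨2, mod_cast natCast_ne_zero Nat.prime_two (by norm_num), fun h ↦ ?_⟩
  exact natCast_ne_zero Nat.prime_three (by norm_num) (by push_cast; linear_combination h)

end SpecialLinearGroupOfField

theorem eq_top_of_surjective_PSL2 {R F : Type*} [CommRing R] [Field F] [Finite F]
    [IsSimpleGroup PSL(2, F)] [Group.IsPerfect SL(2, F)] {p : ℕ} {π : R →+* F} (hp : p.Prime)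
    (h4 : 4 ≤ p) (hnil : IsNilpotent (p : R)) (hπ : Surjective π)
    (hker : RingHom.ker π = Ideal.span {(p : R)}) {L : Subgroup SL(2, R)} {f : L →* PSL(2, F)}
    (hf : Surjective f) : L = ⊤ := by
  let q : L →* SL(2, F) := (SpecialLinearGroup.map π).comp L.subtype
  have hq : IsPGroup p q.ker := by
    rw [← MonoidHom.comap_ker]
    exact (isPGroup_ker_map hnil hker).comap_subtype
  have hq_surj : Surjective q :=
    surjective_of_ker_le_ker card_center_SL2_le_two hf (le_ker_of_isPGroup hp hf hq)
  refine eq_top_of_map_eq_top hp h4 hnil hπ hker ?_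
  rw [← L.range_subtype, MonoidHom.map_range, MonoidHom.range_eq_top.2 hq_surj]

theorem stmt_4_general {R F : Type} [CommRing R] [Field F] [Finite F] {p : ℕ} {π : R →+* F}
    (hp : p.Prime) (h5 : 5 ≤ p) (hnil : IsNilpotent (p : R)) (hπ : Surjective π)
    (hker : RingHom.ker π = Ideal.span {(p : R)}) (G : Subgroup (GL (Fin 2) R)) :
    MemOcc G PSL(2, F) ↔
      (SpecialLinearGroup.toGL : SL(2, R) →* GL (Fin 2) R).range ≤ G := by
  have hpF : (p : F) = 0 := by
    rw [← map_natCast π, ← RingHom.mem_ker, hker]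
    exact Ideal.mem_span_singleton_self _
  obtain ⟨a, ha, hsq⟩ := exists_ne_zero_sq_ne_one hp h5 hpF
  have : Group.IsPerfect SL(2, F) := ⟨SL2.commutator_eq_top ha hsq⟩
  have : IsSimpleGroup PSL(2, F) := ProjectiveSpecialLinearGroup.rank_two_simple' ⟨a, ha, hsq⟩
  constructor
  · intro hocc
    obtain ⟨H, hHG, f, hf⟩ := hocc.exists_le_surjective
    have htop : H.comap SpecialLinearGroup.toGL = ⊤ := eq_top_of_surjective_PSL2 hp (by omega)
      hnil hπ hker (surjective_comp_subgroupComap_toGL hf)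
    rw [MonoidHom.range_eq_map, Subgroup.map_le_iff_le_comap, ← htop]
    exact Subgroup.comap_mono hHG
  · intro hG
    let i : SL(2, R) →* G := SpecialLinearGroup.toGL.codRestrict G fun g ↦ hG ⟨g, rfl⟩
    have hi : Injective i := fun x y h ↦
      SpecialLinearGroup.toGL_injective (congrArg Subtype.val h)
    exact memOcc_of_injective_of_surjective hi
      (f := (QuotientGroup.mk' _).comp (SpecialLinearGroup.map π))
      ((QuotientGroup.mk'_surjective _).comp (surjective_map_SL2 hπ))

lemma ker_castHom_eq_span {m n : ℕ} (h : m ∣ n) :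
    RingHom.ker (ZMod.castHom h (ZMod m)) = Ideal.span {(m : ZMod n)} := by
  ext a
  obtain ⟨a, rfl⟩ := ZMod.intCast_surjective a
  rw [RingHom.mem_ker, Ideal.mem_span_singleton, map_intCast]
  constructor
  · intro ha
    simpa using map_dvd (Int.castRingHom (ZMod n)) ((ZMod.intCast_zmod_eq_zero_iff_dvd a m).1 ha)
  · rintro ⟨b, hb⟩
    rw [← map_intCast (ZMod.castHom h (ZMod m)), hb, map_mul, map_natCast, ZMod.natCast_self,
      zero_mul]

/-- For `ℓ > 5` prime and `G ≤ GL₂(ℤ/ℓʳℤ)`: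
`PSL₂(ℤ/ℓℤ) ∈ Occ(G)` iff `SL₂(ℤ/ℓʳℤ) ⊆ G`. -/
theorem stmt_4 (ℓ r : ℕ) (hℓ : ℓ.Prime) (h5 : 5 < ℓ) (hr : 1 ≤ r)
    (G : Subgroup (GL (Fin 2) (ZMod (ℓ ^ r)))) :
    MemOcc ↥G (PSL2 ℓ) ↔
      (Matrix.SpecialLinearGroup.toGL :
        Matrix.SpecialLinearGroup (Fin 2) (ZMod (ℓ ^ r)) →* GL (Fin 2) (ZMod (ℓ ^ r))).range ≤ G := by
  have := Fact.mk hℓ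
  exact stmt_4_general hℓ h5.le ⟨r, by rw [← Nat.cast_pow, ZMod.natCast_self]⟩
    (ZMod.castHom_surjective _) (ker_castHom_eq_span (dvd_pow_self ℓ (by omega))) G
end

section
/- Let m be a positive integer coprime to 30 and G a subgroup of GL₂(ℤ/mℤ). Then SL₂(ℤ/mℤ) ⊆ G if and only if PSL₂(ℤ/ℓℤ) ∈ Occ(G) for every prime ℓ dividing m. -/
/-! Let `H = G ∩ SL₂(ℤ/m)`. Non-abelian simple sections of `G` are sections of `H`, since the
determinant is abelian-valued. If `ab` kills `ℤ/m`, the matrices of `SL₂(ℤ/m)` that are trivial both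
mod `a` and mod `b` commute, so a simple section `PSL₂(ℓ)` of `H` survives in the reduction of `H`
modulo some prime `p ∣ m`.

Then `p = ℓ`. Indeed, for `p ≠ ℓ` every finite `ℓ`-subgroup `P` of `SL₂(𝔽_p)` is abelian, and the
square of any element normalizing `P` centralizes it. By Frattini's argument this property passes to
all sections, but in `PSL₂(ℓ)` the square of `diag(2, 1/2)` acts on the unipotent `ℓ`-subgroup as
multiplication by `2 ^ 4`, and `2 ^ 4 - 1 = 15` is prime to `ℓ`. By comparing orders, the reduction
of `H` mod `ℓ` is all of `SL₂(𝔽_ℓ)`: a subgroup of index two contains every square, hence every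
transvection.

Following Serre, a subgroup of `SL₂(ℤ/ℓ^k)` that is full mod `ℓ` is full, because for `u ^ 2 = 0`
and `g ≡ 1 + u` mod `ℓ` one has `g ^ (ℓ ^ j) ≡ 1 + ℓ ^ j u` mod `ℓ ^ (j + 1)` once `ℓ ≥ 5`. Applied
to the subgroup of `H` trivial modulo the prime-to-`ℓ` part `n` of `m`, which still has the section
`PSL₂(ℓ)`, this shows that `H` contains the `n`-th power of every transvection. As `ℓ` varies these
exponents have no common factor with `m`, so `H` contains every transvection and is everything. -/

open Function
open Matrix.SpecialLinearGroup (transvection)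
open scoped MatrixGroups

/-- `S` is a section of `G`, that is, a quotient of a subgroup of `G`. For simple non-abelian `S`
this is the condition `S ∈ Occ(G)`, in the encoding of `MemOcc`. -/
def HasSection (G S : Type*) [Group G] [Group S] : Prop :=
  ∃ (K : Subgroup G) (f : K →* S), Surjective f

namespace HasSection

variable {G G' N S : Type*} [Group G] [Group G'] [Group N] [Group S]

theorem of_hom_surjective (f : G →* S) (hf : Surjective f) : HasSection G S :=
  ⟨⊤, f.comp (Subgroup.subtype ⊤), hf.comp fun g ↦ ⟨⟨g, Subgroup.mem_top g⟩, rfl⟩⟩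

theorem of_injective (h : HasSection G S) (φ : G →* G') (hφ : Injective φ) : HasSection G' S := by
  obtain ⟨K, f, hf⟩ := h
  exact ⟨K.map φ, f.comp (K.equivMapOfInjective φ hφ).symm,
    hf.comp (K.equivMapOfInjective φ hφ).symm.surjective⟩

theorem mono {H K : Subgroup G} (h : HasSection H S) (hHK : H ≤ K) : HasSection K S :=
  h.of_injective (Subgroup.inclusion hHK) (Subgroup.inclusion_injective hHK)

theorem subgroup (h : HasSection G S) (T : Subgroup S) : HasSection G T := by
  obtain ⟨K, f, hf⟩ := h
  exact (of_hom_surjective (f.subgroupComap T)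
    (f.subgroupComap_surjective_of_surjective T hf)).of_injective
      (K.subtype.comp (T.comap f).subtype) (K.subtype_injective.comp (T.comap f).subtype_injective)

theorem ker_or_of_surjective [IsSimpleGroup S] {f : G →* S} (hf : Surjective f) (φ : G →* N) :
    HasSection φ.ker S ∨ HasSection N S := by
  rcases (Subgroup.Normal.map (φ.normal_ker) f hf).eq_bot_or_eq_top with hbot | htop
  · right
    have hker : φ.rangeRestrict.ker ≤ f.ker := by
      rw [MonoidHom.ker_rangeRestrict]
      exact (φ.ker.map_eq_bot_iff).mp hbot
    refine ⟨φ.range, φ.rangeRestrict.liftOfSurjective φ.rangeRestrict_surjective ⟨f, hker⟩,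
      fun s ↦ ?_⟩
    obtain ⟨g, rfl⟩ := hf s
    exact ⟨φ.rangeRestrict g, MonoidHom.liftOfRightInverse_comp_apply _ _ _ _ g⟩
  · left
    refine of_hom_surjective (f.comp φ.ker.subtype) fun s ↦ ?_
    obtain ⟨g, hg, rfl⟩ := Subgroup.mem_map.mp (htop ▸ Subgroup.mem_top s)
    exact ⟨⟨g, hg⟩, rfl⟩

theorem ker_or [IsSimpleGroup S] (h : HasSection G S) (φ : G →* N) :
    HasSection φ.ker S ∨ HasSection N S := by
  obtain ⟨K, f, hf⟩ := h
  refine (ker_or_of_surjective hf (φ.comp K.subtype)).imp_left fun h ↦ ?_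
  exact h.of_injective ((K.subtype.comp (φ.comp K.subtype).ker.subtype).codRestrict φ.ker
    fun x ↦ x.2) <| (MonoidHom.injective_codRestrict _ _ _).mpr <|
      K.subtype_injective.comp (φ.comp K.subtype).ker.subtype_injective

theorem inf_ker_or_map [IsSimpleGroup S] {H : Subgroup G} (h : HasSection H S) (φ : G →* N) :
    HasSection (H ⊓ φ.ker : Subgroup G) S ∨ HasSection (H.map φ) S := by
  refine (h.ker_or (φ.subgroupMap H)).imp_left fun h ↦ ?_
  exact h.of_injective ((H.subtype.comp (φ.subgroupMap H).ker.subtype).codRestrict (H ⊓ φ.ker)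
    fun x ↦ ⟨x.1.2, congrArg Subtype.val x.2⟩) <| (MonoidHom.injective_codRestrict _ _ _).mpr <|
      H.subtype_injective.comp (φ.subgroupMap H).ker.subtype_injective

theorem exists_not_commute (h : HasSection G S) (hS : ∃ a b : S, a * b ≠ b * a) :
    ∃ x y : G, x * y ≠ y * x := by
  obtain ⟨K, f, hf⟩ := h
  obtain ⟨a, b, hab⟩ := hS
  obtain ⟨x, rfl⟩ := hf a
  obtain ⟨y, rfl⟩ := hf b
  refine ⟨x, y, fun hxy ↦ hab ?_⟩
  rw [← map_mul, ← map_mul, Subtype.ext (a1 := x * y) (a2 := y * x) hxy]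

theorem inf_ker_of_comm {A : Type*} [CommGroup A] [IsSimpleGroup S]
    (hS : ∃ a b : S, a * b ≠ b * a) {H : Subgroup G} (h : HasSection H S) (φ : G →* A) :
    HasSection (H ⊓ φ.ker : Subgroup G) S :=
  (h.inf_ker_or_map φ).resolve_right fun hA ↦
    let ⟨x, y, hxy⟩ := hA.exists_not_commute hS
    hxy (mul_comm x y)

end HasSection

section Reduction

variable {n : Type*} [Fintype n] [DecidableEq n] {R A B : Type*} [CommRing R] [CommRing A]
  [CommRing B]

theorem mem_ker_specialLinearGroup_map_iff {f : R →+* A} {x : Matrix.SpecialLinearGroup n R} :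
    x ∈ (Matrix.SpecialLinearGroup.map (n := n) f).ker ↔
      ∀ i j, f ((x - 1 : Matrix n n R) i j) = 0 := by
  refine MonoidHom.mem_ker.trans <| (Matrix.SpecialLinearGroup.ext_iff _ _).trans <|
    forall₂_congr fun i j ↦ ?_
  simp only [Matrix.SpecialLinearGroup.map_apply_coe, RingHom.mapMatrix_apply, Matrix.map_apply,
    Matrix.sub_apply, map_sub, sub_eq_zero, Matrix.SpecialLinearGroup.coe_one, Matrix.one_apply,
    apply_ite f, map_one, map_zero]

/-- Writing `x = 1 + X` and `y = 1 + Y`, both `X * Y` and `Y * X` vanish. -/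
theorem mul_comm_of_mem_ker_specialLinearGroup_map {f : R →+* A} {g : R →+* B}
    (hfg : ∀ a b, f a = 0 → g b = 0 → a * b = 0) {x y : Matrix.SpecialLinearGroup n R}
    (hxf : x ∈ (Matrix.SpecialLinearGroup.map (n := n) f).ker)
    (hxg : x ∈ (Matrix.SpecialLinearGroup.map (n := n) g).ker)
    (hyf : y ∈ (Matrix.SpecialLinearGroup.map (n := n) f).ker)
    (hyg : y ∈ (Matrix.SpecialLinearGroup.map (n := n) g).ker) : x * y = y * x := by
  rw [mem_ker_specialLinearGroup_map_iff] at hxf hxg hyf hyg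
  have hxy : (x - 1 : Matrix n n R) * (y - 1 : Matrix n n R) = 0 := by
    ext i j
    exact Finset.sum_eq_zero fun k _ ↦ hfg _ _ (hxf i k) (hyg k j)
  have hyx : (y - 1 : Matrix n n R) * (x - 1 : Matrix n n R) = 0 := by
    ext i j
    exact Finset.sum_eq_zero fun k _ ↦ hfg _ _ (hyf i k) (hxg k j)
  apply Subtype.ext
  calc (x : Matrix n n R) * y = (x - 1) * (y - 1) + (x + y - 1) := by noncomm_ring
    _ = (y - 1) * (x - 1) + (x + y - 1) := by rw [hxy, hyx]
    _ = y * x := by noncomm_ring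

variable {S : Type*} [Group S] [IsSimpleGroup S]

theorem HasSection.map_or_map (hS : ∃ a b : S, a * b ≠ b * a)
    {H : Subgroup (Matrix.SpecialLinearGroup n R)} (h : HasSection H S) (f : R →+* A) (g : R →+* B)
    (hfg : ∀ a b, f a = 0 → g b = 0 → a * b = 0) :
    HasSection (H.map (Matrix.SpecialLinearGroup.map f)) S ∨
      HasSection (H.map (Matrix.SpecialLinearGroup.map g)) S := by
  refine (h.inf_ker_or_map (Matrix.SpecialLinearGroup.map f)).elim (fun hf ↦ Or.inr ?_) Or.inl
  refine (hf.inf_ker_or_map (Matrix.SpecialLinearGroup.map g)).elim (fun hfg' ↦ ?_) fun hg ↦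
    hg.mono (Subgroup.map_mono inf_le_left)
  obtain ⟨x, y, hxy⟩ := hfg'.exists_not_commute hS
  exact (hxy (Subtype.ext
    (mul_comm_of_mem_ker_specialLinearGroup_map hfg x.2.1.2 x.2.2 y.2.1.2 y.2.2))).elim

/-- Reduction `SL_n(ℤ/m) → SL_n(ℤ/k)` for `k ∣ m`. -/
def reduceSL (n : Type*) [Fintype n] [DecidableEq n] {m k : ℕ} (hkm : k ∣ m) :
    Matrix.SpecialLinearGroup n (ZMod m) →* Matrix.SpecialLinearGroup n (ZMod k) :=
  Matrix.SpecialLinearGroup.map (ZMod.castHom hkm (ZMod k))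

theorem reduceSL_comp_reduceSL {m k p : ℕ} (hkm : k ∣ m) (hpk : p ∣ k) :
    (reduceSL n hpk).comp (reduceSL n hkm) = reduceSL n (hpk.trans hkm) :=
  congrArg Matrix.SpecialLinearGroup.map (RingHom.ext_zmod
    ((ZMod.castHom hpk (ZMod p)).comp (ZMod.castHom hkm (ZMod k))) _)

theorem castHom_eq_zero_iff {m k : ℕ} (hkm : k ∣ m) {a : ZMod m} :
    ZMod.castHom hkm (ZMod k) a = 0 ↔ (k : ZMod m) ∣ a := by
  constructor
  · obtain ⟨a, rfl⟩ := ZMod.intCast_surjective a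
    rw [map_intCast, ZMod.intCast_zmod_eq_zero_iff_dvd]
    rintro ⟨b, rfl⟩
    exact ⟨b, by push_cast; rfl⟩
  · rintro ⟨b, rfl⟩
    rw [map_mul, map_natCast, ZMod.natCast_self, zero_mul]

theorem mul_eq_zero_of_castHom_eq_zero {j k m : ℕ} (hj : j ∣ m) (hk : k ∣ m) (hm : m ∣ j * k)
    {a b : ZMod m} (ha : ZMod.castHom hj (ZMod j) a = 0) (hb : ZMod.castHom hk (ZMod k) b = 0) :
    a * b = 0 := by
  rw [castHom_eq_zero_iff] at ha hb
  have hjk : (j * k : ZMod m) = 0 := by exact_mod_cast (ZMod.natCast_eq_zero_iff _ _).mpr hm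
  exact zero_dvd_iff.mp (hjk ▸ mul_dvd_mul ha hb)

theorem HasSection.exists_prime_map_reduceSL (hS : ∃ a b : S, a * b ≠ b * a) {m : ℕ} (hm : m ≠ 0)
    {H : Subgroup (Matrix.SpecialLinearGroup n (ZMod m))} (h : HasSection H S) :
    ∃ p, ∃ hp : p ∣ m, p.Prime ∧ HasSection (H.map (reduceSL n hp)) S := by
  induction m using induction_on_primes with
  | zero => exact (hm rfl).elim
  | one =>
    obtain ⟨x, y, hxy⟩ := h.exists_not_commute hS
    have : Subsingleton (Matrix n n (ZMod 1)) := inferInstance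
    exact (hxy (Subtype.ext (Subtype.ext (Subsingleton.elim _ _)))).elim
  | prime_mul p k hp ih =>
    rcases h.map_or_map hS (ZMod.castHom (dvd_mul_right p k) _) (ZMod.castHom (dvd_mul_left k p) _)
      (fun a b ↦ mul_eq_zero_of_castHom_eq_zero _ _ dvd_rfl) with hmap | hmap
    · exact ⟨p, dvd_mul_right p k, hp, hmap⟩
    · obtain ⟨q, hqk, hq, hsec⟩ := ih (right_ne_zero_of_mul hm) hmap
      rw [← reduceSL, Subgroup.map_map, reduceSL_comp_reduceSL] at hsec
      exact ⟨q, hqk.trans (dvd_mul_left k p), hq, hsec⟩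

end Reduction

section Transvections

variable {n : Type*} [Fintype n] [DecidableEq n] {R S : Type*} [CommRing R] [CommRing S] {i j : n}

theorem map_transvection (f : R →+* S) (hij : i ≠ j) (x : R) :
    Matrix.SpecialLinearGroup.map f (transvection hij x) = transvection hij (f x) := by
  ext k l
  simp [Matrix.SpecialLinearGroup.transvection_coe, Matrix.one_apply, Matrix.single_apply,
    apply_ite f]

theorem transvection_pow (hij : i ≠ j) (x : R) (k : ℕ) :
    transvection hij x ^ k = transvection hij (k * x) := by
  induction k with
  | zero => simp
  | succ k ih =>
    rw [pow_succ, ih, ← Matrix.SpecialLinearGroup.transvection_add, Nat.cast_succ, add_one_mul]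

theorem coe_transvection_zero_one (x : R) :
    ((transvection zero_ne_one x : SL(2, R)) : Matrix (Fin 2) (Fin 2) R) = !![1, x; 0, 1] := by
  ext i j
  fin_cases i <;> fin_cases j <;> simp [Matrix.SpecialLinearGroup.transvection_coe]

theorem coe_transvection_one_zero (x : R) :
    ((transvection one_ne_zero x : SL(2, R)) : Matrix (Fin 2) (Fin 2) R) = !![1, 0; x, 1] := by
  ext i j
  fin_cases i <;> fin_cases j <;> simp [Matrix.SpecialLinearGroup.transvection_coe]

theorem det_fin_two_eq_one (g : SL(2, R)) : g 0 0 * g 1 1 - g 0 1 * g 1 0 = 1 :=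
  (Matrix.det_fin_two _).symm.trans g.2

theorem eq_transvection_mul_transvection_mul_transvection {g : SL(2, R)} {u : Rˣ}
    (hu : g 1 0 = u) :
    g = transvection zero_ne_one ((g 0 0 - 1) * ↑u⁻¹) * transvection one_ne_zero (u : R) *
      transvection zero_ne_one ((g 1 1 - 1) * ↑u⁻¹) := by
  have hdet := det_fin_two_eq_one g
  have huu : (u : R) * ↑u⁻¹ = 1 := u.mul_inv
  rw [hu] at hdet
  refine Subtype.ext (Matrix.ext fun i j ↦ ?_)
  revert i j
  simp only [Matrix.SpecialLinearGroup.coe_mul, coe_transvection_zero_one,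
    coe_transvection_one_zero, Matrix.mul_fin_two, Fin.forall_fin_two, Matrix.of_apply,
    Matrix.cons_val_zero, Matrix.cons_val_one, hu]
  refine ⟨⟨?_, ?_⟩, ?_, ?_⟩
  · linear_combination (1 - g 0 0) * huu
  · linear_combination (-(↑u⁻¹ : R)) * hdet - (g 0 1 + (g 0 0 - 1) * (g 1 1 - 1) * ↑u⁻¹) * huu
  · ring
  · linear_combination (1 - g 1 1) * huu

/-- Rings with finitely many maximal ideals have stable rank one. -/
theorem exists_isUnit_add_mul [Finite (MaximalSpectrum R)] {a c : R} (hac : IsCoprime a c) :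
    ∃ t, IsUnit (a + t * c) := by
  classical
  obtain ⟨t, ht⟩ := Ideal.exists_forall_sub_mem_ideal (I := MaximalSpectrum.asIdeal (R := R))
    (fun I J hIJ ↦ Ideal.isCoprime_of_isMaximal fun h ↦ hIJ (MaximalSpectrum.ext h))
    fun I ↦ if a ∈ I.asIdeal then 1 else 0
  refine ⟨t, by_contra fun hunit ↦ ?_⟩
  obtain ⟨I, hI, hmem⟩ := exists_max_ideal_of_mem_nonunits hunit
  have htI := ht ⟨I, hI⟩
  dsimp only at htI
  split_ifs at htI with ha
  · have hc : c ∈ I := by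
      have := sub_mem (sub_mem hmem ha) (I.mul_mem_right c htI)
      convert this using 1
      ring
    obtain ⟨x, y, hxy⟩ := hac
    exact hI.ne_top ((Ideal.eq_top_iff_one I).mpr
      (hxy ▸ add_mem (I.mul_mem_left x ha) (I.mul_mem_left y hc)))
  · refine ha ?_
    have := sub_mem hmem (I.mul_mem_right c htI)
    convert this using 1
    ring

theorem eq_top_of_transvection_mem [Finite (MaximalSpectrum R)] {H : Subgroup SL(2, R)}
    (hH : ∀ (i j : Fin 2) (hij : i ≠ j) (x : R), transvection hij x ∈ H) : H = ⊤ := by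
  refine eq_top_iff.mpr fun g _ ↦ ?_
  obtain ⟨t, u, hu⟩ := exists_isUnit_add_mul (g.isCoprime_col 0).symm
  have hentry : (transvection one_ne_zero t * g : SL(2, R)) 1 0 = u := by
    simp [coe_transvection_one_zero, Matrix.mul_apply, Fin.sum_univ_two, hu, add_comm]
  rw [← H.mul_mem_cancel_left (hH _ _ one_ne_zero t),
    eq_transvection_mul_transvection_mul_transvection hentry]
  exact mul_mem (mul_mem (hH _ _ _ _) (hH _ _ _ _)) (hH _ _ _ _)

theorem specialLinearGroup_map_surjective [Finite (MaximalSpectrum S)] {f : R →+* S}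
    (hf : Surjective f) : Surjective (Matrix.SpecialLinearGroup.map (n := Fin 2) f) := by
  refine MonoidHom.range_eq_top.mp (eq_top_of_transvection_mem fun i j hij y ↦ ?_)
  obtain ⟨x, rfl⟩ := hf y
  exact ⟨transvection hij x, map_transvection f hij x⟩

end Transvections

section Centralizers

variable {F : Type*} [Field F]

theorem exists_eq_smul_one_add_smul_of_commute {z h : Matrix (Fin 2) (Fin 2) F}
    (hz : z ∉ Set.range (Matrix.scalar (Fin 2))) (hzh : Commute z h) :
    ∃ α β : F, h = α • 1 + β • z := by
  have hentries : z 0 1 ≠ 0 ∨ z 1 0 ≠ 0 ∨ z 0 0 ≠ z 1 1 := by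
    by_contra! hscalar
    refine hz ⟨z 0 0, ?_⟩
    ext i j
    fin_cases i <;> fin_cases j <;> simp [hscalar]
  have hcomm := Matrix.ext_iff.mpr hzh.eq
  simp only [Matrix.mul_apply, Fin.forall_fin_two, Fin.sum_univ_two] at hcomm
  obtain ⟨⟨h00, h01⟩, h10, -⟩ := hcomm
  have hh {β : F} (h01 : h 0 1 = β * z 0 1) (h10 : h 1 0 = β * z 1 0)
      (hdiag : h 0 0 - h 1 1 = β * (z 0 0 - z 1 1)) :
      h = (h 0 0 - β * z 0 0) • 1 + β • z := by
    have h11 : h 1 1 = h 0 0 - β * z 0 0 + β * z 1 1 := by linear_combination -hdiag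
    ext i j
    fin_cases i <;> fin_cases j <;> simp [h01, h10, h11]
  rcases hentries with h01 | h10 | hdiag
  · refine ⟨_, _, hh (β := h 0 1 / z 0 1) ?_ ?_ ?_⟩ <;> field_simp <;> grind
  · refine ⟨_, _, hh (β := h 1 0 / z 1 0) ?_ ?_ ?_⟩ <;> field_simp <;> grind
  · have := sub_ne_zero.mpr hdiag
    refine ⟨_, _, hh (β := (h 0 0 - h 1 1) / (z 0 0 - z 1 1)) ?_ ?_ ?_⟩ <;> field_simp <;> grind

theorem coe_mem_range_scalar_iff {z : SL(2, F)} :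
    (z : Matrix (Fin 2) (Fin 2) F) ∈ Set.range (Matrix.scalar (Fin 2)) ↔
      z ∈ Subgroup.center SL(2, F) := by
  rw [Matrix.SpecialLinearGroup.mem_center_iff]
  refine ⟨fun ⟨r, hr⟩ ↦ ⟨r, ?_, hr⟩, fun ⟨r, _, hr⟩ ↦ ⟨r, hr⟩⟩
  simpa [← hr] using z.det_coe

theorem commute_of_commute_of_notMem_center {z g h : SL(2, F)}
    (hz : z ∉ Subgroup.center SL(2, F)) (hg : Commute z g) (hh : Commute z h) : Commute g h := by
  rw [← coe_mem_range_scalar_iff] at hz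
  obtain ⟨α, β, hg⟩ := exists_eq_smul_one_add_smul_of_commute hz (congrArg Subtype.val hg)
  obtain ⟨γ, δ, hh⟩ := exists_eq_smul_one_add_smul_of_commute hz (congrArg Subtype.val hh)
  refine Subtype.ext ?_
  change (g : Matrix (Fin 2) (Fin 2) F) * h = h * g
  rw [hg, hh]
  simp only [add_mul, mul_add, smul_mul_smul_comm, one_mul, mul_one, mul_comm γ, mul_comm δ]
  abel

theorem sq_eq_one_of_mem_center {z : SL(2, F)} (hz : z ∈ Subgroup.center SL(2, F)) :
    z ^ 2 = 1 := by
  obtain ⟨r, hr, hrz⟩ := Matrix.SpecialLinearGroup.mem_center_iff.mp hz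
  rw [Fintype.card_fin] at hr
  apply Subtype.ext
  rw [Matrix.SpecialLinearGroup.coe_pow, ← hrz, ← map_pow, hr, map_one,
    Matrix.SpecialLinearGroup.coe_one]

/-- Two commuting matrices with the same trace have the same eigenvalues on the same eigenvectors,
up to swapping the eigenvalues. -/
theorem eq_or_eq_inv_of_commute (h2 : (2 : F) ≠ 0) {g h : SL(2, F)} (hgh : Commute g h)
    (htr : h.1.trace = g.1.trace) (hg : g.1.trace ^ 2 ≠ 4) : h = g ∨ h = g⁻¹ := by
  have hcent : g.1 ∉ Set.range (Matrix.scalar (Fin 2)) := by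
    rintro ⟨r, hr⟩
    have hdet : r ^ 2 = 1 := by
      rw [← g.det_coe, ← hr]
      simp
    refine hg ?_
    simp only [← hr, Matrix.trace_fin_two, Matrix.scalar_apply, Matrix.diagonal_apply_eq]
    linear_combination 4 * hdet
  obtain ⟨α, β, hh⟩ := exists_eq_smul_one_add_smul_of_commute hcent (congrArg Subtype.val hgh)
  have hdetg := det_fin_two_eq_one g
  have hdeth : (α + β * g 0 0) * (α + β * g 1 1) - β * g 0 1 * (β * g 1 0) = 1 := by
    simpa [hh, Matrix.det_fin_two] using h.det_coe
  replace htr : α * 2 + β * (g 0 0 + g 1 1) = g 0 0 + g 1 1 := by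
    simpa [hh, Matrix.trace_fin_two] using htr
  rw [Matrix.trace_fin_two] at hg
  have hβ : (β - 1) * (β + 1) = 0 := by
    have : (β - 1) * (β + 1) * ((g 0 0 + g 1 1) ^ 2 - 4) = 0 := by grind
    exact (mul_eq_zero.mp this).resolve_right (sub_ne_zero.mpr hg)
  rcases mul_eq_zero.mp hβ with hβ | hβ
  · left
    have hα : α = 0 := by grind
    apply Subtype.ext
    simp [hh, hα, sub_eq_zero.mp hβ]
  · right
    have hα : α = g 0 0 + g 1 1 := by grind
    ext i j
    rw [hh, Matrix.SpecialLinearGroup.coe_inv, Matrix.adjugate_fin_two]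
    fin_cases i <;> fin_cases j <;> simp [hα, eq_neg_of_add_eq_zero_left hβ]

theorem one_add_pow_of_mul_self_eq_zero {M : Type*} [Ring M] {x : M} (hx : x * x = 0) (k : ℕ) :
    (1 + x) ^ k = 1 + k • x := by
  induction k with
  | zero => simp
  | succ k ih =>
    rw [pow_succ, ih, add_mul, one_mul, smul_mul_assoc, mul_add, mul_one, hx, add_zero, succ_nsmul,
      add_assoc, add_comm x]

theorem eq_one_of_pow_eq_one_of_coprime {G : Type*} [Group G] {x : G} {a b : ℕ} (ha : x ^ a = 1)
    (hb : x ^ b = 1) (hab : a.Coprime b) : x = 1 :=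
  orderOf_eq_one_iff.mp (Nat.eq_one_of_dvd_coprimes hab (orderOf_dvd_of_pow_eq_one ha)
    (orderOf_dvd_of_pow_eq_one hb))

/-- Both eigenvalues of `g ^ 2` are `1`. -/
theorem eq_one_of_trace_sq_eq_four {g : SL(2, F)} {q : ℕ} (hg : g.1.trace ^ 2 = 4)
    (hgq : g ^ q = 1) (hq : Odd q) (hqF : (q : F) ≠ 0) : g = 1 := by
  have hdet := det_fin_two_eq_one g
  rw [Matrix.trace_fin_two] at hg
  set N : Matrix (Fin 2) (Fin 2) F := g.1 ^ 2 - 1 with hN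
  have hNN : N * N = 0 := by
    ext i j
    fin_cases i <;> fin_cases j <;>
      simp only [hN, pow_two, Matrix.mul_apply, Fin.sum_univ_two, Fin.mk_one, Fin.zero_eta,
        Matrix.sub_apply, Matrix.one_apply_eq, Matrix.zero_apply, ne_eq, zero_ne_one, one_ne_zero,
        not_false_eq_true, Matrix.one_apply_ne] <;> grind
  have hqN : (q : F) • N = 0 := by
    rw [Nat.cast_smul_eq_nsmul, ← add_eq_left (a := (1 : Matrix (Fin 2) (Fin 2) F)),
      ← one_add_pow_of_mul_self_eq_zero hNN, hN, add_sub_cancel, ← pow_mul, mul_comm, pow_mul,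
      ← Matrix.SpecialLinearGroup.coe_pow, hgq, Matrix.SpecialLinearGroup.coe_one, one_pow]
  have hg2 : g ^ 2 = 1 := by
    apply Subtype.ext
    rw [Matrix.SpecialLinearGroup.coe_pow, Matrix.SpecialLinearGroup.coe_one, ← sub_eq_zero]
    exact (smul_eq_zero.mp hqN).resolve_left hqF
  exact eq_one_of_pow_eq_one_of_coprime hg2 hgq (Nat.coprime_two_left.mpr hq)

theorem commute_of_isPGroup {ℓ : ℕ} [Fact ℓ.Prime] (hℓ : Odd ℓ) {P : Subgroup SL(2, F)} [Finite P]
    (hP : IsPGroup ℓ P) {g h : SL(2, F)} (hg : g ∈ P) (hh : h ∈ P) : Commute g h := by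
  rcases subsingleton_or_nontrivial P with _ | _
  · exact congrArg Subtype.val (Subsingleton.elim ((⟨g, hg⟩ : P) * ⟨h, hh⟩) (⟨h, hh⟩ * ⟨g, hg⟩))
  have := hP.center_nontrivial
  obtain ⟨⟨z, hz⟩, hz1⟩ := exists_ne (1 : Subgroup.center P)
  have hcomm {x} (hx : x ∈ P) : Commute (z : SL(2, F)) x :=
    (congrArg Subtype.val (Subgroup.mem_center_iff.mp hz ⟨x, hx⟩)).symm
  refine commute_of_commute_of_notMem_center (z := z) (fun hc ↦ hz1 ?_) (hcomm hg) (hcomm hh)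
  obtain ⟨k, hk⟩ := hP z
  refine Subtype.ext (Subtype.ext ?_)
  exact eq_one_of_pow_eq_one_of_coprime (sq_eq_one_of_mem_center hc) (congrArg Subtype.val hk)
    (Nat.coprime_two_left.mpr hℓ.pow)

/-- The conjugate `t * u * t⁻¹` commutes with `u` and has the same trace, so it is `u` or `u⁻¹`. -/
theorem commute_sq_of_mem_normalizer (h2 : (2 : F) ≠ 0) {ℓ : ℕ} [Fact ℓ.Prime] (hℓ : Odd ℓ)
    (hℓF : (ℓ : F) ≠ 0) {P : Subgroup SL(2, F)} [Finite P] (hP : IsPGroup ℓ P) {t u : SL(2, F)}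
    (ht : t ∈ Subgroup.normalizer (P : Set SL(2, F))) (hu : u ∈ P) : Commute (t ^ 2) u := by
  obtain ⟨k, hk⟩ := hP ⟨u, hu⟩
  by_cases htr : u.1.trace ^ 2 = 4
  · rw [eq_one_of_trace_sq_eq_four htr (congrArg Subtype.val hk) hℓ.pow
      (by exact_mod_cast pow_ne_zero k hℓF)]
    exact Commute.one_right _
  have htr' : (t * u * t⁻¹ : SL(2, F)).1.trace = u.1.trace := by
    rw [Matrix.SpecialLinearGroup.coe_mul, Matrix.trace_mul_comm,
      ← Matrix.SpecialLinearGroup.coe_mul, inv_mul_cancel_left]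
  have hcomm : Commute u (t * u * t⁻¹) :=
    commute_of_isPGroup hℓ hP hu ((Subgroup.mem_normalizer_iff.mp ht u).mp hu)
  have hconj : t ^ 2 * u * (t ^ 2)⁻¹ = t * (t * u * t⁻¹) * t⁻¹ := by
    rw [pow_two, mul_inv_rev]
    simp only [mul_assoc]
  refine mul_inv_eq_iff_eq_mul.mp (hconj.trans ?_)
  rcases eq_or_eq_inv_of_commute h2 hcomm htr' htr with h | h
  · rw [h, h]
  · rw [h, ← conj_inv, h, inv_inv]

end Centralizers

section Frattini

variable {Γ T : Type*} [Group Γ] [Finite Γ] [Group T] {ℓ : ℕ} [Fact ℓ.Prime] {f : Γ →* T}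
  {U : Subgroup T}

/-- Frattini's argument, for a Sylow subgroup of the preimage of `U`. -/
theorem exists_isPGroup_map_eq_of_normal (hf : Surjective f) [U.Normal] (hU : IsPGroup ℓ U) :
    ∃ P : Subgroup Γ, IsPGroup ℓ P ∧ P.map f = U ∧
      (Subgroup.normalizer (P : Set Γ)).map f = ⊤ := by
  obtain ⟨P⟩ : Nonempty (Sylow ℓ (U.comap f)) := inferInstance
  have hPU : (P.map (U.comap f).subtype).map f = U := by
    have htop : P.map (f.subgroupComap U) = ⊤ :=
      ((P.mapSurjective (f.subgroupComap_surjective_of_surjective U hf)).is_maximal'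
        (hU.to_subgroup ⊤) le_top).symm
    have hcomp : f.comp (U.comap f).subtype = U.subtype.comp (f.subgroupComap U) := rfl
    rw [Subgroup.map_map, hcomp, ← Subgroup.map_map, htop, ← MonoidHom.range_eq_map,
      Subgroup.range_subtype]
  refine ⟨P.map (U.comap f).subtype, P.2.map _, hPU, ?_⟩
  calc (Subgroup.normalizer (P.map (U.comap f).subtype : Set Γ)).map f
    _ = (Subgroup.normalizer (P.map (U.comap f).subtype : Set Γ)).map f ⊔ U :=
      (sup_eq_left.mpr (hPU.ge.trans (Subgroup.map_mono Subgroup.le_normalizer))).symm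
    _ = (Subgroup.normalizer (P.map (U.comap f).subtype : Set Γ) ⊔ U.comap f).map f := by
      rw [Subgroup.map_sup, Subgroup.map_comap_eq_self_of_surjective hf]
    _ = ⊤ := by rw [P.normalizer_sup_eq_top, Subgroup.map_top_of_surjective f hf]

end Frattini

section SectionsInOtherCharacteristic

variable {F : Type*} [Field F] {ℓ : ℕ} [Fact ℓ.Prime] {H : Subgroup SL(2, F)} [Finite H]
  {T : Type*} [Group T] {U : Subgroup T}

theorem HasSection.commute_sq_of_normal (hT : HasSection H T) (h2 : (2 : F) ≠ 0) (hℓ : Odd ℓ)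
    (hℓF : (ℓ : F) ≠ 0) [U.Normal] (hU : IsPGroup ℓ U) (t : T) {u : T} (hu : u ∈ U) :
    Commute (t ^ 2) u := by
  obtain ⟨K, f, hf⟩ := hT
  obtain ⟨P, hP, hPU, hnormalizer⟩ := exists_isPGroup_map_eq_of_normal hf hU
  obtain ⟨s, hs, rfl⟩ := Subgroup.mem_map.mp (hnormalizer ▸ Subgroup.mem_top t)
  obtain ⟨g, hg, rfl⟩ := Subgroup.mem_map.mp (hPU ▸ hu)
  let ι : K →* SL(2, F) := H.subtype.comp K.subtype
  have hι : Injective ι := H.subtype_injective.comp K.subtype_injective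
  have : Finite (P.map ι) := ((P : Set K).toFinite.image ι).to_subtype
  rw [← map_pow]
  refine Commute.map (hι ?_) f
  rw [map_mul, map_mul, map_pow]
  exact commute_sq_of_mem_normalizer h2 hℓ hℓF (hP.map ι)
    (Subgroup.le_normalizer_map ι (Subgroup.mem_map_of_mem ι hs)) (Subgroup.mem_map_of_mem ι hg)

theorem HasSection.commute_sq (hT : HasSection H T) (h2 : (2 : F) ≠ 0) (hℓ : Odd ℓ)
    (hℓF : (ℓ : F) ≠ 0) (hU : IsPGroup ℓ U) {t u : T}
    (ht : t ∈ Subgroup.normalizer (U : Set T)) (hu : u ∈ U) : Commute (t ^ 2) u := by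
  have : (U.subgroupOf (Subgroup.normalizer (U : Set T))).Normal := Subgroup.normal_in_normalizer
  have hcomm := (hT.subgroup (Subgroup.normalizer (U : Set T))).commute_sq_of_normal h2 hℓ hℓF
    (U := U.subgroupOf _) hU.comap_subtype ⟨t, ht⟩ (u := ⟨u, Subgroup.le_normalizer hu⟩) hu
  exact congrArg Subtype.val hcomm

end SectionsInOtherCharacteristic

section UpperUnipotent

/-- The group of upper unitriangular matrices in `SL₂(R)`. -/
def upperUnipotent (R : Type*) [CommRing R] : Subgroup SL(2, R) where
  carrier := Set.range (transvection zero_ne_one)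
  one_mem' := ⟨0, Matrix.SpecialLinearGroup.transvection_coeff_zero _⟩
  mul_mem' := by
    rintro _ _ ⟨x, rfl⟩ ⟨y, rfl⟩
    exact ⟨x + y, Matrix.SpecialLinearGroup.transvection_add _ x y⟩
  inv_mem' := by
    rintro _ ⟨x, rfl⟩
    exact ⟨-x, (Matrix.SpecialLinearGroup.transvection_inv _ x).symm⟩

theorem isPGroup_upperUnipotent (R : Type*) [CommRing R] (ℓ : ℕ) [CharP R ℓ] :
    IsPGroup ℓ (upperUnipotent R) := by
  rintro ⟨_, x, rfl⟩
  refine ⟨1, Subtype.ext ?_⟩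
  change transvection zero_ne_one x ^ ℓ ^ 1 = 1
  rw [pow_one, transvection_pow, CharP.cast_eq_zero, zero_mul,
    Matrix.SpecialLinearGroup.transvection_coeff_zero]

variable {K : Type*} [Field K] {a : K} (ha : a ≠ 0)

theorem diag2_mul_transvection (x : K) :
    Matrix.SpecialLinearGroup.diag2 a ha * transvection zero_ne_one x =
      transvection zero_ne_one (a ^ 2 * x) * Matrix.SpecialLinearGroup.diag2 a ha := by
  apply Subtype.ext
  rw [Matrix.SpecialLinearGroup.coe_mul, Matrix.SpecialLinearGroup.coe_mul,
    coe_transvection_zero_one, coe_transvection_zero_one, Matrix.SpecialLinearGroup.diag2_coe']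
  have hax : a * x = a ^ 2 * x * a⁻¹ := by field_simp
  simp [hax]

theorem diag2_mem_normalizer_upperUnipotent :
    Matrix.SpecialLinearGroup.diag2 a ha ∈
      Subgroup.normalizer (upperUnipotent K : Set SL(2, K)) := by
  refine Subgroup.mem_normalizer_iff.mpr fun h ↦ ⟨?_, ?_⟩
  · rintro ⟨x, rfl⟩
    exact ⟨a ^ 2 * x, eq_mul_inv_of_mul_eq (diag2_mul_transvection ha x).symm⟩
  · rintro ⟨y, hy⟩
    refine ⟨(a ^ 2)⁻¹ * y, mul_left_cancel (a := Matrix.SpecialLinearGroup.diag2 a ha) ?_⟩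
    rw [diag2_mul_transvection, mul_inv_cancel_left₀ (pow_ne_zero 2 ha), hy,
      inv_mul_cancel_right]

/-- The square of `diag(a, a⁻¹)` conjugates the transvection of parameter `x` to that of parameter
`a ^ 4 * x`. -/
theorem HasSection.pow_four_eq_one {F : Type*} [Field F] {H : Subgroup SL(2, F)} [Finite H]
    (h : HasSection H PSL(2, K)) (h2 : (2 : F) ≠ 0) {ℓ : ℕ} [Fact ℓ.Prime] (hℓ : Odd ℓ)
    (hℓF : (ℓ : F) ≠ 0) [CharP K ℓ] (ha : a ≠ 0) : a ^ 4 = 1 := by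
  let π : SL(2, K) →* PSL(2, K) := QuotientGroup.mk' _
  set d := Matrix.SpecialLinearGroup.diag2 a ha with hd
  have hcomm : Commute (π d ^ 2) (π (transvection zero_ne_one 1)) :=
    h.commute_sq h2 hℓ hℓF ((isPGroup_upperUnipotent K ℓ).map π)
      (Subgroup.le_normalizer_map π
        (Subgroup.mem_map_of_mem π (diag2_mem_normalizer_upperUnipotent ha)))
      (Subgroup.mem_map_of_mem π ⟨1, rfl⟩)
  have hconj : d ^ 2 * transvection zero_ne_one 1 = transvection zero_ne_one (a ^ 4) * d ^ 2 := by
    have ha4 : a ^ 2 * (a ^ 2 * 1) = a ^ 4 := by ring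
    rw [pow_two, mul_assoc, hd, diag2_mul_transvection, ← mul_assoc, diag2_mul_transvection,
      mul_assoc, ha4]
  have hπ : π (transvection zero_ne_one 1) = π (transvection zero_ne_one (a ^ 4)) := by
    refine mul_right_cancel (b := π d ^ 2) (hcomm.eq.symm.trans ?_)
    rw [← map_pow, ← map_mul, hconj, map_mul]
  have hcenter := QuotientGroup.eq.mp hπ
  rw [Matrix.SpecialLinearGroup.transvection_inv, ← Matrix.SpecialLinearGroup.transvection_add,
    Matrix.SpecialLinearGroup.transvection_mem_center_iff] at hcenter
  linear_combination hcenter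

end UpperUnipotent

section FullOverField

theorem HasSection.card_dvd {G S : Type*} [Group G] [Group S] (h : HasSection G S) :
    Nat.card S ∣ Nat.card G := by
  obtain ⟨K, f, hf⟩ := h
  exact (Subgroup.card_dvd_of_surjective f hf).trans K.card_subgroup_dvd_card

variable {K : Type*} [Field K]

theorem card_center_le_two : Nat.card (Subgroup.center SL(2, K)) ≤ 2 := by
  rw [Nat.card_congr
    (Matrix.SpecialLinearGroup.center_equiv_rootsOfUnity (n := Fin 2) (R := K)).toEquiv]
  simpa using card_rootsOfUnity K 2

theorem specialLinearGroup_eq_top_of_index_eq_two (h2 : (2 : K) ≠ 0) {H : Subgroup SL(2, K)}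
    (hH : H.index = 2) : H = ⊤ := by
  refine eq_top_of_transvection_mem fun i j hij x ↦ ?_
  have hsq : transvection hij x = transvection hij (x / 2) ^ 2 := by
    rw [transvection_pow, Nat.cast_ofNat, mul_div_cancel₀ x h2]
  exact hsq ▸ Subgroup.sq_mem_of_index_two hH _

theorem HasSection.eq_top_of_psl [Finite K] (h2 : (2 : K) ≠ 0) {H : Subgroup SL(2, K)}
    (h : HasSection H PSL(2, K)) : H = ⊤ := by
  have hindex : H.index ∣ Nat.card (Subgroup.center SL(2, K)) := by
    refine Nat.dvd_of_mul_dvd_mul_left (Nat.card_pos (α := PSL(2, K))) ?_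
    rw [← Subgroup.card_eq_card_quotient_mul_card_subgroup, ← H.card_mul_index]
    exact mul_dvd_mul_right h.card_dvd _
  have hle := (Nat.le_of_dvd Nat.card_pos hindex).trans card_center_le_two
  have hpos := Nat.pos_of_dvd_of_pos hindex Nat.card_pos
  obtain h1 | h2' : H.index = 1 ∨ H.index = 2 := by lia
  · exact Subgroup.index_eq_one.mp h1
  · exact specialLinearGroup_eq_top_of_index_eq_two h2 h2'

end FullOverField

section PrimePowers

variable {M : Type*} [Ring M] {ℓ : ℕ}

theorem natCast_pow_dvd_iff {n : ℕ} {x : M} : (ℓ : M) ^ n ∣ x ↔ ∃ y, x = ℓ ^ n • y := by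
  simp only [dvd_def, nsmul_eq_mul, Nat.cast_pow]

theorem pow_succ_dvd_one_add_pow_sub (hℓ : ℓ.Prime) (h5 : 5 ≤ ℓ) {n : ℕ} (hn : 1 ≤ n) {w : M}
    (hw : (ℓ : M) ^ n ∣ w ^ 2) : (ℓ : M) ^ (n + 1) ∣ (1 + w) ^ ℓ - (1 + ℓ • w) := by
  obtain ⟨x, hx⟩ := natCast_pow_dvd_iff.mp hw
  have hterm (i : ℕ) (hi : i ∈ Finset.range (ℓ - 1)) :
      (ℓ : M) ^ (n + 1) ∣ ℓ.choose (i + 2) • w ^ (i + 2) := by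
    rw [Finset.mem_range] at hi
    rcases (show i + 2 ≤ ℓ by lia).lt_or_eq with hlt | hi
    · obtain ⟨c, hc⟩ := hℓ.dvd_choose_self (by lia) hlt
      refine natCast_pow_dvd_iff.mpr ⟨c • (x * w ^ i), ?_⟩
      rw [hc, add_comm, pow_add, hx]
      simp only [smul_mul_assoc]
      module
    · have hw4 : w ^ 4 = ℓ ^ (n + n) • (x * x) := by
        rw [show w ^ 4 = w ^ 2 * w ^ 2 by rw [← pow_add], hx, smul_mul_smul_comm, pow_add]
      rw [hi, Nat.choose_self, one_smul]
      exact (pow_dvd_pow _ (by lia)).trans <| (natCast_pow_dvd_iff.mpr ⟨_, hw4⟩).trans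
        (pow_dvd_pow w (by lia))
  have hsum : (1 + w) ^ ℓ - (1 + ℓ • w) =
      ∑ i ∈ Finset.range (ℓ - 1), ℓ.choose (i + 2) • w ^ (i + 2) := by
    obtain ⟨k, rfl⟩ : ∃ k, ℓ = k + 1 := ⟨ℓ - 1, by lia⟩
    rw [add_comm 1 w, (Commute.one_right w).add_pow',
      Finset.Nat.sum_antidiagonal_eq_sum_range_succ_mk, Finset.sum_range_succ',
      Finset.sum_range_succ', Nat.add_sub_cancel]
    simp only [one_pow, mul_one, zero_add, pow_one, Nat.choose_one_right, pow_zero,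
      Nat.choose_zero_right, one_smul]
    abel
  exact hsum ▸ Finset.dvd_sum hterm

theorem pow_succ_dvd_pow_prime_pow_sub (hℓ : ℓ.Prime) (h5 : 5 ≤ ℓ) {g u : M} (hu : u * u = 0)
    (hgu : (ℓ : M) ∣ g - (1 + u)) (j : ℕ) :
    (ℓ : M) ^ (j + 1) ∣ g ^ ℓ ^ j - (1 + u) ^ ℓ ^ j := by
  simp only [one_add_pow_of_mul_self_eq_zero hu]
  induction j with
  | zero => simpa using hgu
  | succ j ih =>
    obtain ⟨v, hv⟩ := natCast_pow_dvd_iff.mp ih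
    set w := ℓ ^ j • (u + ℓ • v) with hw
    have hg : g ^ ℓ ^ j = 1 + w := by
      rw [sub_eq_iff_eq_add.mp hv, hw]
      module
    have hw2 : w ^ 2 = ℓ ^ (2 * j + 1) • (u * v + v * u + ℓ • (v * v)) := by
      rw [pow_two, hw]
      simp only [mul_add, add_mul, smul_add, smul_mul_assoc, mul_smul_comm, hu, smul_zero, zero_add]
      module
    have hpow : (ℓ : M) ^ (j + 2) ∣ (1 + w) ^ ℓ - (1 + ℓ • w) :=
      (pow_dvd_pow _ (by lia)).trans
        (pow_succ_dvd_one_add_pow_sub hℓ h5 (by lia) (natCast_pow_dvd_iff.mpr ⟨_, hw2⟩))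
    have hsplit : g ^ ℓ ^ (j + 1) - (1 + ℓ ^ (j + 1) • u) =
        (1 + w) ^ ℓ - (1 + ℓ • w) + ℓ ^ (j + 2) • v := by
      rw [pow_succ ℓ, pow_mul, hg, hw]
      module
    exact hsplit ▸ dvd_add hpow (natCast_pow_dvd_iff.mpr ⟨v, rfl⟩)

end PrimePowers

section CongruenceSubgroups

variable {R : Type*} [CommRing R]

/-- The principal congruence subgroup of level `q`: the kernel of `SL₂(R) → SL₂(R/q)`. -/
def congruenceSubgroup (q : R) : Subgroup SL(2, R) :=
  (Matrix.SpecialLinearGroup.map (Ideal.Quotient.mk (Ideal.span {q}))).ker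

instance (q : R) : (congruenceSubgroup q).Normal := MonoidHom.normal_ker _

theorem inv_mul_mem_congruenceSubgroup_iff {q : R} {g h : SL(2, R)} :
    g⁻¹ * h ∈ congruenceSubgroup q ↔ ∀ i j, q ∣ h i j - g i j := by
  refine (MonoidHom.eq_iff _).symm.trans <| (Matrix.SpecialLinearGroup.ext_iff _ _).trans <|
    forall₂_congr fun i j ↦ ?_
  rw [← Ideal.Quotient.eq_zero_iff_dvd, map_sub, sub_eq_zero]
  rfl

theorem mem_congruenceSubgroup_iff {q : R} {g : SL(2, R)} :
    g ∈ congruenceSubgroup q ↔ ∀ i j, q ∣ (g - 1 : Matrix (Fin 2) (Fin 2) R) i j := by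
  simpa using inv_mul_mem_congruenceSubgroup_iff (q := q) (g := 1) (h := g)

theorem congruenceSubgroup_zero : congruenceSubgroup (0 : R) = ⊥ := by
  refine (Subgroup.eq_bot_iff_forall _).mpr fun g hg ↦ Subtype.ext <| sub_eq_zero.mp ?_
  ext i j
  exact zero_dvd_iff.mp (mem_congruenceSubgroup_iff.mp hg i j)

theorem congruenceSubgroup_mono {q r : R} (hqr : q ∣ r) :
    congruenceSubgroup r ≤ congruenceSubgroup q := fun _ hg ↦
  mem_congruenceSubgroup_iff.mpr fun i j ↦ hqr.trans (mem_congruenceSubgroup_iff.mp hg i j)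

end CongruenceSubgroups

section Lifting

variable {R : Type*} [CommRing R]

theorem natCast_dvd_matrix_iff {k : ℕ} {A : Matrix (Fin 2) (Fin 2) R} :
    (k : Matrix (Fin 2) (Fin 2) R) ∣ A ↔ ∀ i j, (k : R) ∣ A i j := by
  constructor
  · rintro ⟨B, rfl⟩ i j
    rw [← nsmul_eq_mul, Matrix.smul_apply, nsmul_eq_mul]
    exact dvd_mul_right _ _
  · intro h
    choose B hB using h
    refine ⟨Matrix.of B, ?_⟩
    ext i j
    rw [← nsmul_eq_mul, Matrix.smul_apply, nsmul_eq_mul, hB, Matrix.of_apply]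

theorem conj_transvection_sub_one_mul_self (g : SL(2, R)) {i j : Fin 2} (hij : i ≠ j) (x : R) :
    ((g * transvection hij x * g⁻¹ : SL(2, R)) - 1 : Matrix (Fin 2) (Fin 2) R) *
      ((g * transvection hij x * g⁻¹ : SL(2, R)) - 1) = 0 := by
  have hginv : (g⁻¹ : SL(2, R)).1 * g.1 = 1 := by
    rw [← Matrix.SpecialLinearGroup.coe_mul, inv_mul_cancel, Matrix.SpecialLinearGroup.coe_one]
  have hconj : ((g * transvection hij x * g⁻¹ : SL(2, R)) - 1 : Matrix (Fin 2) (Fin 2) R) =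
      g.1 * Matrix.single i j x * (g⁻¹ : SL(2, R)).1 := by
    rw [Matrix.SpecialLinearGroup.coe_mul, Matrix.SpecialLinearGroup.coe_mul,
      Matrix.SpecialLinearGroup.transvection_coe, mul_add, mul_one, add_mul,
      ← Matrix.SpecialLinearGroup.coe_mul, mul_inv_cancel, Matrix.SpecialLinearGroup.coe_one,
      add_sub_cancel_left]
  calc _ = g.1 * (Matrix.single i j x * ((g⁻¹ : SL(2, R)).1 * g.1) * Matrix.single i j x) *
        (g⁻¹ : SL(2, R)).1 := by rw [hconj]; noncomm_ring
    _ = 0 := by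
      rw [hginv, mul_one, Matrix.single_mul_single_of_ne _ _ _ _ hij.symm, mul_zero, zero_mul]

/-- Modulo `q ^ 2`, the matrices `1 + q X` multiply as the traceless `X` add, and these are spanned
by `!![0, 1; 0, 0]`, `!![0, 0; 1, 0]` and the conjugate `!![1, -1; 1, -1]` of the latter. -/
theorem exists_inv_mul_mem_congruenceSubgroup_sq {q : R} {g : SL(2, R)}
    (hg : g ∈ congruenceSubgroup q) :
    ∃ a b c : R, (transvection zero_ne_one 1 * transvection one_ne_zero (q * a) *
      (transvection zero_ne_one 1)⁻¹ * (transvection zero_ne_one (q * b) *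
        transvection one_ne_zero (q * c)))⁻¹ * g ∈ congruenceSubgroup (q ^ 2) := by
  choose X hX using mem_congruenceSubgroup_iff.mp hg
  have hdet := det_fin_two_eq_one g
  have h00 : g 0 0 = 1 + q * X 0 0 := by simpa [sub_eq_iff_eq_add'] using hX 0 0
  have h01 : g 0 1 = q * X 0 1 := by simpa using hX 0 1
  have h10 : g 1 0 = q * X 1 0 := by simpa using hX 1 0
  have h11 : g 1 1 = 1 + q * X 1 1 := by simpa [sub_eq_iff_eq_add'] using hX 1 1
  refine ⟨X 0 0, X 0 0 + X 0 1, X 1 0 - X 0 0, inv_mul_mem_congruenceSubgroup_iff.mpr ?_⟩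
  rw [h00, h01, h10, h11] at hdet
  simp only [Matrix.SpecialLinearGroup.transvection_inv, Matrix.SpecialLinearGroup.coe_mul,
    coe_transvection_zero_one, coe_transvection_one_zero, Fin.forall_fin_two, Matrix.mul_fin_two,
    Matrix.of_apply, Matrix.cons_val_zero, Matrix.cons_val_one, h00, h01, h10, h11]
  set a := X 0 0
  set b := a + X 0 1 with hb
  set c := X 1 0 - a with hc
  refine ⟨⟨⟨a * c - b * c - q * a * b * c, by ring⟩, ⟨-(a * b), by rw [hb]; ring⟩⟩,
    ⟨⟨a * c - q * a * b * c, by rw [hc]; ring⟩, ⟨X 0 1 * X 1 0 - a * X 1 1 - a * b, ?_⟩⟩⟩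
  linear_combination hdet

variable {ℓ : ℕ} {H : Subgroup SL(2, R)}

theorem conj_transvection_pow_mem_sup (hℓ : ℓ.Prime) (h5 : 5 ≤ ℓ)
    (hH : H ⊔ congruenceSubgroup (ℓ : R) = ⊤) (g : SL(2, R)) {i j : Fin 2} (hij : i ≠ j) (x : R)
    (k : ℕ) :
    g * transvection hij (ℓ ^ k * x) * g⁻¹ ∈ H ⊔ congruenceSubgroup ((ℓ : R) ^ (k + 1)) := by
  set t := g * transvection hij x * g⁻¹ with ht
  obtain ⟨h, hh, y, hy, hhy⟩ := Subgroup.mem_sup_of_normal_right.mp (hH ▸ Subgroup.mem_top t)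
  have hdvd : (ℓ : Matrix (Fin 2) (Fin 2) R) ^ (k + 1) ∣ t.1 ^ ℓ ^ k - h.1 ^ ℓ ^ k := by
    have hht : (ℓ : Matrix (Fin 2) (Fin 2) R) ∣ h.1 - (1 + (t.1 - 1)) := by
      rw [add_sub_cancel, dvd_sub_comm, natCast_dvd_matrix_iff]
      exact inv_mul_mem_congruenceSubgroup_iff.mp (by rwa [← hhy, inv_mul_cancel_left])
    have hpow := pow_succ_dvd_pow_prime_pow_sub hℓ h5
      (conj_transvection_sub_one_mul_self g hij x) hht k
    rwa [add_sub_cancel, dvd_sub_comm] at hpow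
  have htk : g * transvection hij (ℓ ^ k * x) * g⁻¹ = t ^ ℓ ^ k := by
    rw [ht, conj_pow, transvection_pow, Nat.cast_pow]
  have hmem : (h ^ ℓ ^ k)⁻¹ * t ^ ℓ ^ k ∈ congruenceSubgroup ((ℓ : R) ^ (k + 1)) := by
    rw [inv_mul_mem_congruenceSubgroup_iff]
    exact_mod_cast natCast_dvd_matrix_iff.mp (by exact_mod_cast hdvd)
  rw [htk, ← mul_inv_cancel_left (h ^ ℓ ^ k) (t ^ ℓ ^ k)]
  exact Subgroup.mul_mem_sup (pow_mem hh _) hmem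

theorem congruenceSubgroup_le_sup (hℓ : ℓ.Prime) (h5 : 5 ≤ ℓ)
    (hH : H ⊔ congruenceSubgroup (ℓ : R) = ⊤) {k : ℕ} (hk : 1 ≤ k) :
    congruenceSubgroup ((ℓ : R) ^ k) ≤ H ⊔ congruenceSubgroup ((ℓ : R) ^ (k + 1)) := by
  intro g hg
  obtain ⟨a, b, c, habc⟩ := exists_inv_mul_mem_congruenceSubgroup_sq hg
  have hmem {i j : Fin 2} (hij : i ≠ j) (x : R) := by
    simpa using conj_transvection_pow_mem_sup hℓ h5 hH 1 hij x k
  refine (Subgroup.mul_mem_cancel_left _ (inv_mem ?_)).mp <| Subgroup.mem_sup_right <|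
    congruenceSubgroup_mono (pow_mul (ℓ : R) k 2 ▸ pow_dvd_pow _ (by lia)) habc
  exact mul_mem (conj_transvection_pow_mem_sup hℓ h5 hH _ _ _ _)
    (mul_mem (hmem zero_ne_one b) (hmem one_ne_zero c))

theorem eq_top_of_sup_congruenceSubgroup_eq_top (hℓ : ℓ.Prime) (h5 : 5 ≤ ℓ)
    (hnil : IsNilpotent (ℓ : R)) (hH : H ⊔ congruenceSubgroup (ℓ : R) = ⊤) : H = ⊤ := by
  have hsup (k : ℕ) : H ⊔ congruenceSubgroup ((ℓ : R) ^ (k + 1)) = ⊤ := by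
    induction k with
    | zero => simpa using hH
    | succ k ih =>
      exact eq_top_iff.mpr <| ih ▸ sup_le le_sup_left
        (congruenceSubgroup_le_sup hℓ h5 hH (Nat.le_add_left 1 k))
  obtain ⟨k, hk⟩ := hnil
  simpa [pow_succ, hk, congruenceSubgroup_zero] using hsup k

end Lifting

theorem mem_of_forall_prime_exists_pow_mem {G : Type*} [Group G] {H : Subgroup G} {g : G} {m : ℕ}
    (hm : g ^ m ∈ H) (h : ∀ ℓ, ℓ.Prime → ℓ ∣ m → ∃ n, ¬ ℓ ∣ n ∧ g ^ n ∈ H) : g ∈ H := by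
  have hperiod (n : ℕ) : g ^ n ∈ H ↔ MulAction.period g ((1 : G) : G ⧸ H) ∣ n := by
    rw [← MulAction.pow_smul_eq_iff_period_dvd, MulAction.Quotient.smul_coe, smul_eq_mul, mul_one,
      eq_comm, QuotientGroup.eq, inv_one, one_mul]
  have hone : MulAction.period g ((1 : G) : G ⧸ H) = 1 := by
    by_contra hne
    obtain ⟨ℓ, hℓ, hdvd⟩ := Nat.exists_prime_and_dvd hne
    obtain ⟨n, hℓn, hn⟩ := h ℓ hℓ (hdvd.trans ((hperiod m).mp hm))
    exact hℓn (hdvd.trans ((hperiod n).mp hn))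
  simpa using (hperiod 1).mpr hone.dvd

section CoprimeToThirty

theorem five_le_of_coprime_thirty {ℓ : ℕ} (hℓ : ℓ.Prime) (h30 : ℓ.Coprime 30) : 5 ≤ ℓ := by
  by_contra! hlt
  have := hℓ.two_le
  interval_cases ℓ <;> simp_all +decide

theorem natCast_ne_zero_of_coprime {ℓ d : ℕ} [Fact ℓ.Prime] (hd : ℓ.Coprime d) :
    (d : ZMod ℓ) ≠ 0 :=
  ((ZMod.isUnit_iff_coprime d ℓ).mpr hd.symm).ne_zero

theorem psl_exists_not_commute {K : Type*} [Field K] (hK : ∃ a : K, a ≠ 0 ∧ a ^ 2 ≠ 1) :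
    ∃ a b : PSL(2, K), a * b ≠ b * a := by
  by_contra! hcomm
  have hbot : commutator PSL(2, K) = ⊥ := Subgroup.commutator_eq_bot_iff_le_centralizer.mpr
    fun a _ ↦ Subgroup.mem_centralizer_iff.mpr fun b _ ↦ hcomm b a
  exact bot_ne_top (hbot.symm.trans (SL2Simple.PSL_commutator_eq_top hK))

theorem ker_reduceSL {m k : ℕ} (hkm : k ∣ m) :
    (reduceSL (Fin 2) hkm).ker = congruenceSubgroup (k : ZMod m) := by
  ext g
  simp only [reduceSL, mem_ker_specialLinearGroup_map_iff, mem_congruenceSubgroup_iff,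
    castHom_eq_zero_iff]

variable {ℓ : ℕ} [hℓ : Fact ℓ.Prime]

theorem two_ne_zero_of_coprime_thirty (h30 : ℓ.Coprime 30) : (2 : ZMod ℓ) ≠ 0 :=
  mod_cast natCast_ne_zero_of_coprime (h30.coprime_dvd_right (by norm_num : 2 ∣ 30))

theorem two_pow_four_ne_one (h30 : ℓ.Coprime 30) : (2 : ZMod ℓ) ^ 4 ≠ 1 := fun h ↦ by
  refine natCast_ne_zero_of_coprime (h30.coprime_dvd_right (by norm_num : 15 ∣ 30)) ?_
  push_cast
  linear_combination h

theorem exists_ne_zero_and_sq_ne_one (h30 : ℓ.Coprime 30) : ∃ a : ZMod ℓ, a ≠ 0 ∧ a ^ 2 ≠ 1 :=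
  ⟨2, two_ne_zero_of_coprime_thirty h30, fun h ↦
    two_pow_four_ne_one h30 (by linear_combination (2 ^ 2 + 1) * h)⟩

theorem psl_isSimpleGroup (h30 : ℓ.Coprime 30) : IsSimpleGroup PSL(2, ZMod ℓ) :=
  Matrix.ProjectiveSpecialLinearGroup.rank_two_simple' (exists_ne_zero_and_sq_ne_one h30)

theorem HasSection.eq_of_prime (h30 : ℓ.Coprime 30) {p : ℕ} [Fact p.Prime]
    (h2 : (2 : ZMod p) ≠ 0) {H : Subgroup SL(2, ZMod p)} (h : HasSection H PSL(2, ZMod ℓ)) :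
    ℓ = p := by
  by_contra hne
  have hodd : Odd ℓ := Nat.coprime_two_right.mp (h30.coprime_dvd_right (by norm_num : 2 ∣ 30))
  have hℓp : (ℓ : ZMod p) ≠ 0 :=
    natCast_ne_zero_of_coprime ((Nat.coprime_primes Fact.out Fact.out).mpr (Ne.symm hne))
  exact two_pow_four_ne_one h30
    (h.pow_four_eq_one h2 hodd hℓp (two_ne_zero_of_coprime_thirty h30))

theorem HasSection.dvd_and_map_reduceSL_eq_top {m : ℕ} (hm : m.Coprime 30) (h30 : ℓ.Coprime 30)
    {H : Subgroup SL(2, ZMod m)} (h : HasSection H PSL(2, ZMod ℓ)) :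
    ∃ hℓm : ℓ ∣ m, H.map (reduceSL (Fin 2) hℓm) = ⊤ := by
  have := psl_isSimpleGroup h30
  have hm0 : m ≠ 0 := by rintro rfl; simp at hm
  obtain ⟨p, hpm, hp, hsec⟩ := h.exists_prime_map_reduceSL
    (psl_exists_not_commute (exists_ne_zero_and_sq_ne_one h30)) hm0
  have := Fact.mk hp
  obtain rfl := hsec.eq_of_prime h30 (two_ne_zero_of_coprime_thirty (hm.coprime_dvd_left hpm))
  exact ⟨hpm, hsec.eq_top_of_psl (two_ne_zero_of_coprime_thirty h30)⟩

theorem HasSection.eq_top_of_prime_pow (h30 : ℓ.Coprime 30) {k : ℕ}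
    {H : Subgroup SL(2, ZMod (ℓ ^ k))} (h : HasSection H PSL(2, ZMod ℓ)) : H = ⊤ := by
  obtain ⟨hℓk, hmap⟩ := h.dvd_and_map_reduceSL_eq_top (h30.pow_left k) h30
  have hnil : IsNilpotent (ℓ : ZMod (ℓ ^ k)) := ⟨k, by exact_mod_cast ZMod.natCast_self (ℓ ^ k)⟩
  refine eq_top_of_sup_congruenceSubgroup_eq_top hℓ.out
    (five_le_of_coprime_thirty hℓ.out h30) hnil ?_
  rw [← ker_reduceSL hℓk, ← Subgroup.comap_map_eq, hmap, Subgroup.comap_top]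

theorem disjoint_ker_reduceSL {m j k : ℕ} (hj : j ∣ m) (hk : k ∣ m) (hjk : j.Coprime k)
    (hm : m ∣ j * k) : Disjoint (reduceSL (Fin 2) hj).ker (reduceSL (Fin 2) hk).ker := by
  rw [Subgroup.disjoint_def]
  intro g hgj hgk
  rw [ker_reduceSL, mem_congruenceSubgroup_iff] at hgj hgk
  refine Subtype.ext <| sub_eq_zero.mp <| Matrix.ext fun a b ↦ zero_dvd_iff.mp ?_
  have hjk0 : (j * k : ZMod m) = 0 := by exact_mod_cast (ZMod.natCast_eq_zero_iff _ _).mpr hm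
  exact hjk0 ▸ hjk.cast.mul_dvd (hgj a b) (hgk a b)

theorem HasSection.ker_reduceSL_le {k n : ℕ} (h30 : (ℓ ^ k * n).Coprime 30) (hℓ30 : ℓ.Coprime 30)
    (hℓn : ¬ ℓ ∣ n) {H : Subgroup SL(2, ZMod (ℓ ^ k * n))} (h : HasSection H PSL(2, ZMod ℓ)) :
    (reduceSL (Fin 2) (dvd_mul_left n (ℓ ^ k))).ker ≤ H := by
  have := psl_isSimpleGroup hℓ30
  set φ := reduceSL (Fin 2) (dvd_mul_left n (ℓ ^ k))
  set ψ := reduceSL (Fin 2) (dvd_mul_right (ℓ ^ k) n)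
  have hn (K : Subgroup SL(2, ZMod n)) : ¬ HasSection K PSL(2, ZMod ℓ) := fun hK ↦
    hℓn (hK.dvd_and_map_reduceSL_eq_top (h30.coprime_dvd_left (dvd_mul_left _ _)) hℓ30).1
  have hφ : HasSection (H ⊓ φ.ker : Subgroup _) PSL(2, ZMod ℓ) :=
    (h.inf_ker_or_map φ).resolve_right (hn _)
  have hψ : HasSection ((H ⊓ φ.ker).map ψ) PSL(2, ZMod ℓ) :=
    (hφ.map_or_map (psl_exists_not_commute (exists_ne_zero_and_sq_ne_one hℓ30))
      (ZMod.castHom (dvd_mul_left n _) _) (ZMod.castHom (dvd_mul_right _ n) _) fun a b ↦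
        mul_eq_zero_of_castHom_eq_zero _ _ (mul_comm _ n).dvd).resolve_left (hn _)
  have hdisj : Disjoint φ.ker ψ.ker := disjoint_ker_reduceSL _ _
    (((Nat.Prime.coprime_iff_not_dvd hℓ.out).mpr hℓn).pow_left k).symm (mul_comm _ n).dvd
  intro g hg
  obtain ⟨g', ⟨hg'H, hg'φ⟩, hgg'⟩ :=
    Subgroup.mem_map.mp (hψ.eq_top_of_prime_pow hℓ30 ▸ Subgroup.mem_top (ψ g))
  have hψgg' : g'⁻¹ * g ∈ ψ.ker := (MonoidHom.eq_iff ψ).mp hgg'.symm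
  rwa [← inv_mul_eq_one.mp <| Subgroup.disjoint_def.mp hdisj
    (mul_mem (inv_mem hg'φ) hg) hψgg']

theorem eq_top_of_forall_hasSection_psl {m : ℕ} (hm : m.Coprime 30) {H : Subgroup SL(2, ZMod m)}
    (h : ∀ ℓ, ℓ.Prime → ℓ ∣ m → HasSection H PSL(2, ZMod ℓ)) : H = ⊤ := by
  have : NeZero m := ⟨by rintro rfl; simp at hm⟩
  refine eq_top_of_transvection_mem fun i j hij x ↦
    mem_of_forall_prime_exists_pow_mem (m := m) ?_ fun ℓ hℓ hℓm ↦ ?_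
  · simp [transvection_pow, one_mem]
  · have := Fact.mk hℓ
    obtain ⟨k, n, hℓn, rfl⟩ := Nat.exists_eq_pow_mul_and_not_dvd (NeZero.ne m) ℓ hℓ.ne_one
    refine ⟨n, hℓn, (h ℓ hℓ hℓm).ker_reduceSL_le hm (hm.coprime_dvd_left hℓm) hℓn ?_⟩
    rw [transvection_pow, MonoidHom.mem_ker, reduceSL, map_transvection, map_mul, map_natCast,
      ZMod.natCast_self, zero_mul, Matrix.SpecialLinearGroup.transvection_coeff_zero]

end CoprimeToThirty

section GeneralLinear

variable {n : Type*} [Fintype n] [DecidableEq n] {R S : Type*} [CommRing R] [Group S]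
  {G : Subgroup (GL n R)}

theorem range_toGL_eq_ker_det :
    (Matrix.SpecialLinearGroup.toGL : Matrix.SpecialLinearGroup n R →* GL n R).range =
      Matrix.GeneralLinearGroup.det.ker := by
  ext g
  refine ⟨?_, fun hg ↦ ⟨⟨g, congrArg Units.val hg⟩, Units.ext rfl⟩⟩
  rintro ⟨x, rfl⟩
  exact Units.ext x.2

theorem HasSection.of_range_toGL_le
    (hG : (Matrix.SpecialLinearGroup.toGL : Matrix.SpecialLinearGroup n R →* GL n R).range ≤ G)
    (f : Matrix.SpecialLinearGroup n R →* S) (hf : Surjective f) : HasSection G S :=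
  (of_hom_surjective f hf).of_injective
    (Matrix.SpecialLinearGroup.toGL.codRestrict G fun x ↦ hG ⟨x, rfl⟩)
    ((MonoidHom.injective_codRestrict _ _ _).mpr Matrix.SpecialLinearGroup.toGL_injective)

theorem HasSection.comap_toGL [IsSimpleGroup S] (hS : ∃ a b : S, a * b ≠ b * a)
    (h : HasSection G S) : HasSection (G.comap Matrix.SpecialLinearGroup.toGL) S := by
  have hker := h.inf_ker_of_comm hS Matrix.GeneralLinearGroup.det
  rw [← range_toGL_eq_ker_det, inf_comm, ← Subgroup.map_comap_eq] at hker
  let e := Subgroup.equivMapOfInjective (G.comap Matrix.SpecialLinearGroup.toGL)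
    Matrix.SpecialLinearGroup.toGL Matrix.SpecialLinearGroup.toGL_injective
  exact hker.of_injective e.symm.toMonoidHom e.symm.injective

end GeneralLinear

/-- For `m` coprime to `30` and `G ≤ GL₂(ℤ/mℤ)`:
`SL₂(ℤ/mℤ) ⊆ G` iff `PSL₂(ℤ/ℓℤ) ∈ Occ(G)` for every prime `ℓ ∣ m`. -/
theorem stmt_5 (m : ℕ) (hm : 0 < m) (hcop : Nat.Coprime m 30)
    (G : Subgroup (GL (Fin 2) (ZMod m))) :
    (Matrix.SpecialLinearGroup.toGL :
        Matrix.SpecialLinearGroup (Fin 2) (ZMod m) →* GL (Fin 2) (ZMod m)).range ≤ G ↔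
      ∀ ℓ : ℕ, ℓ.Prime → ℓ ∣ m → MemOcc ↥G (PSL2 ℓ) := by
  constructor
  · intro hG ℓ hℓ hℓm
    have := Fact.mk hℓ
    have h30 : ℓ.Coprime 30 := hcop.coprime_dvd_left hℓm
    exact ⟨psl_isSimpleGroup h30, psl_exists_not_commute (exists_ne_zero_and_sq_ne_one h30),
      HasSection.of_range_toGL_le hG ((QuotientGroup.mk' _).comp (reduceSL (Fin 2) hℓm))
        ((QuotientGroup.mk'_surjective _).comp
          (specialLinearGroup_map_surjective (ZMod.ringHom_surjective _)))⟩
  · intro h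
    have htop : G.comap Matrix.SpecialLinearGroup.toGL = ⊤ :=
      eq_top_of_forall_hasSection_psl hcop fun ℓ hℓ hℓm ↦
        have ⟨_, hcomm, hsec⟩ := h ℓ hℓ hℓm
        HasSection.comap_toGL hcomm hsec
    rw [MonoidHom.range_eq_map]
    exact Subgroup.map_le_iff_le_comap.mpr htop.ge
end

section
/- For any prime ℓ > 5 not dividing m and any g ≥ 1, PSp_{2g}(ℤ/ℓℤ) ∉ Occ(GSp_{2g}(ℤ/mℤ)). -/
/-- `PSp_{2g}(ℤ/ℓℤ) = Sp_{2g}(ℤ/ℓℤ)/{±I}`, realized as the quotient by the center. -/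
abbrev PSp (g ℓ : ℕ) : Type :=
  ↥(Matrix.symplecticGroup (Fin g) (ZMod ℓ)) ⧸
    Subgroup.center ↥(Matrix.symplecticGroup (Fin g) (ZMod ℓ))

open Matrix

/-- The symplectic similitude group `GSp_{2g}(ℤ/mℤ)`, as a subgroup of
`GL_{2g}(ℤ/mℤ)`: matrices preserving the standard symplectic form `J` up to a
unit scalar. -/
def GSp (g m : ℕ) : Subgroup (GL (Fin g ⊕ Fin g) (ZMod m)) where
  carrier := {A | ∃ u : (ZMod m)ˣ,
    (A : Matrix (Fin g ⊕ Fin g) (Fin g ⊕ Fin g) (ZMod m)) * Matrix.J (Fin g) (ZMod m) *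
        (A : Matrix (Fin g ⊕ Fin g) (Fin g ⊕ Fin g) (ZMod m))ᵀ =
      (u : ZMod m) • Matrix.J (Fin g) (ZMod m)}
  one_mem' := ⟨1, by simp⟩
  mul_mem' := by
    rintro a b ⟨u, hu⟩ ⟨v, hv⟩
    refine ⟨u * v, ?_⟩
    have hab : ((a * b : GL (Fin g ⊕ Fin g) (ZMod m)) :
        Matrix (Fin g ⊕ Fin g) (Fin g ⊕ Fin g) (ZMod m)) =
        (a : Matrix _ _ _) * (b : Matrix _ _ _) := rfl
    rw [hab, transpose_mul, show (a : Matrix _ _ _) * (b : Matrix _ _ _) * Matrix.J (Fin g) (ZMod m) *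
      ((b : Matrix _ _ _)ᵀ * (a : Matrix _ _ _)ᵀ) =
      (a : Matrix _ _ _) * ((b : Matrix _ _ _) * Matrix.J (Fin g) (ZMod m) * (b : Matrix _ _ _)ᵀ) *
        (a : Matrix _ _ _)ᵀ by simp only [Matrix.mul_assoc], hv,
      Matrix.mul_smul, Matrix.smul_mul, hu, smul_smul, Units.val_mul]
    ring_nf
  inv_mem' := by
    rintro a ⟨u, hu⟩
    refine ⟨u⁻¹, ?_⟩
    set M := Matrix (Fin g ⊕ Fin g) (Fin g ⊕ Fin g) (ZMod m)
    have hdet : IsUnit ((a : M).det) := (Matrix.isUnit_iff_isUnit_det _).mp a.isUnit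
    have h1 : ((a⁻¹ : GL (Fin g ⊕ Fin g) (ZMod m)) : M) = (a : M)⁻¹ := by
      simp [Matrix.coe_units_inv]
    have h2 : (a : M)⁻¹ * ((a : M) * Matrix.J (Fin g) (ZMod m) * (a : M)ᵀ) * ((a : M)ᵀ)⁻¹ =
        Matrix.J (Fin g) (ZMod m) := by
      rw [show (a : M)⁻¹ * ((a : M) * Matrix.J (Fin g) (ZMod m) * (a : M)ᵀ) * ((a : M)ᵀ)⁻¹ =
          ((a : M)⁻¹ * (a : M)) * Matrix.J (Fin g) (ZMod m) * ((a : M)ᵀ * ((a : M)ᵀ)⁻¹) by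
            simp only [Matrix.mul_assoc],
        Matrix.nonsing_inv_mul _ hdet,
        Matrix.mul_nonsing_inv _ (by rwa [Matrix.det_transpose]),
        Matrix.one_mul, Matrix.mul_one]
    rw [hu] at h2
    have h3 : (u : ZMod m) • ((a : M)⁻¹ * Matrix.J (Fin g) (ZMod m) * ((a : M)ᵀ)⁻¹) =
        Matrix.J (Fin g) (ZMod m) := by
      rw [Matrix.mul_smul, Matrix.smul_mul] at h2
      exact h2
    have h4 := congrArg (fun X : M => ((u⁻¹ : (ZMod m)ˣ) : ZMod m) • X) h3
    simp only [smul_smul] at h4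
    rw [h1, Matrix.transpose_nonsing_inv]
    rw [show ((u⁻¹ : (ZMod m)ˣ) : ZMod m) * (u : ZMod m) = 1 by
      rw [← Units.val_mul, inv_mul_cancel, Units.val_one], one_smul] at h4
    exact h4

/-!
Let `S = PSp_{2g}(𝔽_ℓ)` be a quotient of a subgroup of `GSp_{2g}(ℤ/mℤ) ≤ GL_{2g}(ℤ/mℤ)`. The
kernels of `GL(ℤ/pa) → GL(ℤ/p)` and `GL(ℤ/pa) → GL(ℤ/a)` commute, so the simplicity of `S` lets us
replace `m` by one of its prime divisors `p ≠ ℓ`.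

An `ℓ`-subgroup of `S` then lifts to an `ℓ`-subgroup `P` of `GL_{2g}(𝔽_p)`. A maximal abelian normal
subgroup `A` of `P` is its own centralizer and is diagonalizable over the algebraic closure, so
`P / A` permutes the at most `2g` weights of `A` faithfully and `[P : A]` divides `(2g)!`.

* For `g ≥ 2`, the `ℓ`-subgroup of `S` generated by the matrices `(1 X; 0 1)`, `X` symmetric, and by
  `ℓ ^ (g - 1)` transvections in the Levi subgroup has no abelian subgroup of index less than
  `ℓ ^ (g - 1)`. By Legendre's formula `(ℓ - 1) * (g - 1) < 2 * g`, which fails.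
* For `g = 1`, `P` is abelian as `2 < ℓ`, and the square of any element normalizing it centralizes
  it. In `S` this forces `u ^ 4 = 1` for all `u ∈ 𝔽_ℓˣ`, but `ℓ ∤ 2 ^ 4 - 1 = 3 * 5`.
-/

section NilpotentGroups

open Subgroup
open scoped commutatorElement

-- Inductively, `centralizer A` meets every term of the upper central series inside `A`: an element
-- of the next term which centralizes `A` generates, together with `A`, a normal abelian subgroup.
theorem centralizer_le_of_maximal_normal_isMulCommutative {P : Type*} [Group P]
    [Group.IsNilpotent P] {A : Subgroup P}
    (hA : Maximal (fun B : Subgroup P ↦ B.Normal ∧ IsMulCommutative B) A) :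
    centralizer (A : Set P) ≤ A := by
  have hAn : A.Normal := hA.prop.1
  have hAc : IsMulCommutative A := hA.prop.2
  suffices h : ∀ n, centralizer (A : Set P) ⊓ Subgroup.upperCentralSeries P n ≤ A by
    obtain ⟨n, hn⟩ := Group.IsNilpotent.nilpotent P
    simpa [hn] using h n
  intro n
  induction n with
  | zero => simp
  | succ n ih =>
    rintro x ⟨hxA, hxn⟩
    have hAx : A ≤ closure (A ∪ {x}) := fun a ha ↦ subset_closure (.inl ha)
    have hx : x ∈ closure (A ∪ {x}) := subset_closure (.inr rfl)
    have hcomm : IsMulCommutative (closure (A ∪ {x} : Set P)) := by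
      refine isMulCommutative_closure ?_
      rintro a (ha | rfl) b (hb | rfl)
      · exact setLike_mul_comm ha hb
      · exact mem_centralizer_iff.mp hxA a ha
      · exact (mem_centralizer_iff.mp hxA b hb).symm
      · rfl
    have hnormal : (closure (A ∪ {x} : Set P)).Normal := by
      refine ⟨fun y hy p ↦ ?_⟩
      suffices hle : closure (A ∪ {x} : Set P) ≤
          (closure (A ∪ {x} : Set P)).comap (MulAut.conj p).toMonoidHom from hle hy
      rw [closure_le]
      rintro a (ha | rfl)
      · exact hAx (hAn.conj_mem a ha p)
      · have hcommutator : ⁅a, p⁆ ∈ A := by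
          refine ih ⟨?_, Subgroup.mem_upperCentralSeries_succ_iff.mp hxn p⟩
          rw [commutatorElement_def, mul_assoc a, mul_assoc a]
          exact mul_mem hxA (Normal.conj_mem inferInstance _ (inv_mem hxA) p)
        have hconj : p * a * p⁻¹ = ⁅a, p⁆⁻¹ * a := by simp [commutatorElement_def, mul_assoc]
        change p * a * p⁻¹ ∈ closure (A ∪ {a} : Set P)
        rw [hconj]
        exact mul_mem (inv_mem (hAx hcommutator)) hx
    exact hA.le_of_ge ⟨hnormal, hcomm⟩ hAx hx

theorem exists_normal_isMulCommutative_centralizer_le (P : Type*) [Group P] [Finite P]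
    [Group.IsNilpotent P] :
    ∃ A : Subgroup P, A.Normal ∧ IsMulCommutative A ∧ centralizer (A : Set P) ≤ A := by
  obtain ⟨A, hA⟩ := (Set.toFinite {B : Subgroup P | B.Normal ∧ IsMulCommutative B}).exists_maximal
    ⟨⊥, inferInstance, inferInstance⟩
  exact ⟨A, hA.prop.1, hA.prop.2, centralizer_le_of_maximal_normal_isMulCommutative hA⟩

end NilpotentGroups

section Weights

open Module

variable {k G V : Type*} [Field k] [Group G] [AddCommGroup V] [Module k V]
  (ρ : Representation k G V) (A : Subgroup G)

/-- The simultaneous eigenspace of the operators `ρ a`, `a ∈ A`, with eigenvalues `χ a`. The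
function `χ` is not required to be a character. -/
def weightSpace (χ : A → k) : Submodule k V :=
  ⨅ a : A, End.eigenspace (ρ a) (χ a)

/-- The functions `χ : A → k` for which `weightSpace ρ A χ` is nonzero. -/
def Weight : Type _ := {χ : A → k // weightSpace ρ A χ ≠ ⊥}

variable {ρ A}

theorem mem_weightSpace {χ : A → k} {v : V} :
    v ∈ weightSpace ρ A χ ↔ ∀ a : A, ρ a v = χ a • v := by
  simp only [weightSpace, Submodule.mem_iInf, End.mem_eigenspace_iff]

theorem map_mem_weightSpace [A.Normal] {χ : A → k} {v : V} (hv : v ∈ weightSpace ρ A χ) (g : G) :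
    ρ g v ∈ weightSpace ρ A (fun a ↦ χ (MulAut.conjNormal g⁻¹ a)) := by
  rw [mem_weightSpace] at hv ⊢
  intro a
  have hga : (a : G) * g = g * (MulAut.conjNormal g⁻¹ a : A) := by
    simp [mul_assoc]
  rw [← End.mul_apply, ← map_mul, hga, map_mul, End.mul_apply, hv, map_smul]

/-- The action of `G` on the weights of a normal subgroup `A` by conjugation on `A`. -/
instance [A.Normal] : MulAction G (Weight ρ A) where
  smul g χ := ⟨fun a ↦ χ.1 (MulAut.conjNormal g⁻¹ a), by
    obtain ⟨v, hv, hv0⟩ := Submodule.exists_mem_ne_zero_of_ne_bot χ.2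
    refine (Submodule.ne_bot_iff _).mpr ⟨ρ g v, map_mem_weightSpace hv g, fun h ↦ hv0 ?_⟩
    simpa using congrArg (ρ g⁻¹) h⟩
  one_smul χ := Subtype.ext <| by ext a; simp [HSMul.hSMul]
  mul_smul g h χ := Subtype.ext <| by ext a; simp [HSMul.hSMul]

theorem iSupIndep_weightSpace [IsMulCommutative A] : iSupIndep (weightSpace ρ A) := by
  refine (End.independent_iInf_maxGenEigenspace_of_forall_mapsTo (fun a : A ↦ ρ a)
    fun a b ↦ End.mapsTo_maxGenEigenspace_of_comm ?_).mono fun χ ↦ ?_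
  · exact Commute.map (setLike_mul_comm b.2 a.2 : Commute (b : G) a) ρ
  · exact iInf_mono fun a ↦ (End.genEigenspace (ρ a) (χ a)).monotone le_top

theorem isSemisimple_of_natCast_card_ne_zero (hA : (Nat.card A : k) ≠ 0) (a : A) :
    End.IsSemisimple (ρ a) := by
  refine End.isSemisimple_of_squarefree_aeval_eq_zero
    (Polynomial.X_pow_sub_one_separable_iff.mpr hA).squarefree ?_
  have ha : (a : G) ^ Nat.card A = 1 := mod_cast pow_card_eq_one' (x := a)
  rw [map_sub, map_pow, Polynomial.aeval_X, map_one, ← map_pow, ha, map_one, sub_self]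

variable [FiniteDimensional k V]

theorem iSup_weightSpace_eq_top [IsAlgClosed k] [IsMulCommutative A] (hA : (Nat.card A : k) ≠ 0) :
    ⨆ χ, weightSpace ρ A χ = ⊤ := by
  have h := End.iSup_iInf_maxGenEigenspace_eq_top_of_iSup_maxGenEigenspace_eq_top_of_commute
    (fun a : A ↦ ρ a) (fun a b _ ↦ Commute.map (setLike_mul_comm a.2 b.2 : Commute (a : G) b) ρ)
    fun a ↦ End.iSup_maxGenEigenspace_eq_top (ρ a)
  simpa only [weightSpace, (isSemisimple_of_natCast_card_ne_zero hA _).isFinitelySemisimple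
    |>.maxGenEigenspace_eq_eigenspace] using h

instance [IsMulCommutative A] : Finite (Weight ρ A) :=
  have := iSupIndep_weightSpace (ρ := ρ) (A := A) |>.fintypeNeBotOfFiniteDimensional
  Fintype.finite this

theorem card_weight_le_finrank [IsMulCommutative A] :
    Nat.card (Weight ρ A) ≤ finrank k V := by
  have hind := iSupIndep_weightSpace (ρ := ρ) (A := A)
  let := hind.fintypeNeBotOfFiniteDimensional
  rw [Weight, Nat.card_eq_fintype_card]
  exact hind.subtype_ne_bot_le_finrank

variable [IsAlgClosed k] [A.Normal] [IsMulCommutative A]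

theorem ker_toPermHom_weight_le_centralizer (hρ : Function.Injective ρ)
    (hA : (Nat.card A : k) ≠ 0) :
    (MulAction.toPermHom G (Weight ρ A)).ker ≤ Subgroup.centralizer A := by
  intro g hg
  have hfix (χ : Weight ρ A) (a : A) : χ.1 (MulAut.conjNormal g⁻¹ a) = χ.1 a :=
    congrFun (congrArg Subtype.val (DFunLike.congr_fun (MonoidHom.mem_ker.mp hg) χ)) a
  rw [Subgroup.mem_centralizer_iff]
  intro a ha
  suffices h : g⁻¹ * a * g = a by rw [← mul_right_inj g⁻¹, ← mul_assoc, h, inv_mul_cancel_left]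
  refine hρ (LinearMap.ext fun v ↦ ?_)
  suffices hle : ⨆ χ, weightSpace ρ A χ ≤ LinearMap.eqLocus (ρ (g⁻¹ * a * g)) (ρ a) from
    hle ((iSup_weightSpace_eq_top (ρ := ρ) hA).ge Submodule.mem_top)
  refine iSup_le fun χ v hv ↦ ?_
  by_cases hχ : weightSpace ρ A χ = ⊥
  · rw [hχ, Submodule.mem_bot] at hv
    simp [hv]
  · have hv' := mem_weightSpace.mp hv
    have hconj := hv' (MulAut.conjNormal g⁻¹ ⟨a, ha⟩)
    rw [show χ _ = χ _ from hfix ⟨χ, hχ⟩ ⟨a, ha⟩, ← hv' ⟨a, ha⟩] at hconj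
    simpa using hconj

theorem index_centralizer_dvd_factorial_finrank (hρ : Function.Injective ρ)
    (hA : (Nat.card A : k) ≠ 0) :
    (Subgroup.centralizer (A : Set G)).index ∣ (finrank k V).factorial := by
  let act := MulAction.toPermHom G (Weight ρ A)
  calc (Subgroup.centralizer (A : Set G)).index
    _ ∣ act.ker.index := Subgroup.index_dvd_of_le (ker_toPermHom_weight_le_centralizer hρ hA)
    _ = Nat.card act.range := Subgroup.index_ker act
    _ ∣ Nat.card (Equiv.Perm (Weight ρ A)) := act.range.card_subgroup_dvd_card
    _ = (Nat.card (Weight ρ A)).factorial := Nat.card_perm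
    _ ∣ (finrank k V).factorial := Nat.factorial_dvd_factorial card_weight_le_finrank

end Weights

section Subquotients

/-- `S` is isomorphic to a quotient of a subgroup of `G`: the third clause of `MemOcc`. -/
def IsSubquotient (S G : Type*) [Group S] [Group G] : Prop :=
  ∃ (K : Subgroup G) (f : K →* S), Function.Surjective f

namespace IsSubquotient

variable {S G H H' : Type*} [Group S] [Group G] [Group H] [Group H']

theorem of_injective_of_surjective (i : H →* G) (hi : Function.Injective i) (f : H →* S)
    (hf : Function.Surjective f) : IsSubquotient S G :=
  ⟨i.range, f.comp (i.ofInjective hi).symm.toMonoidHom, hf.comp (i.ofInjective hi).symm.surjective⟩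

theorem map (h : IsSubquotient S G) (φ : G →* H) (hφ : Function.Injective φ) :
    IsSubquotient S H :=
  let ⟨K, f, hf⟩ := h
  of_injective_of_surjective (φ.comp K.subtype) (hφ.comp K.subtype_injective) f hf

theorem subgroup (h : IsSubquotient S G) (T : Subgroup S) : IsSubquotient T G :=
  let ⟨K, f, hf⟩ := h
  of_injective_of_surjective (K.subtype.comp (T.comap f).subtype)
    (K.subtype_injective.comp (T.comap f).subtype_injective) (f.subgroupComap T)
    (f.subgroupComap_surjective_of_surjective T hf)

theorem of_map_ker_comp_subtype_eq_bot {K : Subgroup G} {f : K →* S} (hf : Function.Surjective f)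
    {φ : G →* H} (hφ : (φ.comp K.subtype).ker.map f = ⊥) : IsSubquotient S H := by
  have hker : (φ.comp K.subtype).rangeRestrict.ker ≤ f.ker := by
    rwa [MonoidHom.ker_rangeRestrict, ← Subgroup.map_eq_bot_iff]
  refine ⟨(φ.comp K.subtype).range,
    (φ.comp K.subtype).rangeRestrict.liftOfSurjective
      (φ.comp K.subtype).rangeRestrict_surjective ⟨f, hker⟩, fun s ↦ ?_⟩
  obtain ⟨x, rfl⟩ := hf s
  exact ⟨_, MonoidHom.liftOfRightInverse_comp_apply ..⟩

-- The images in `S` of the two kernels are normal and commute with each other, so one of them is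
-- trivial, and then `S` is a quotient of the image of the subgroup covering `S`.
theorem of_commute_ker [IsSimpleGroup S] (hS : ∃ a b : S, a * b ≠ b * a)
    (h : IsSubquotient S G) (φ : G →* H) (ψ : G →* H')
    (hcomm : ∀ x ∈ φ.ker, ∀ y ∈ ψ.ker, Commute x y) :
    IsSubquotient S H ∨ IsSubquotient S H' := by
  obtain ⟨K, f, hf⟩ := h
  obtain hφ | hφ := (Subgroup.Normal.map inferInstance f hf :
    ((φ.comp K.subtype).ker.map f).Normal).eq_bot_or_eq_top
  · exact .inl (of_map_ker_comp_subtype_eq_bot hf hφ)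
  obtain hψ | hψ := (Subgroup.Normal.map inferInstance f hf :
    ((ψ.comp K.subtype).ker.map f).Normal).eq_bot_or_eq_top
  · exact .inr (of_map_ker_comp_subtype_eq_bot hf hψ)
  obtain ⟨a, b, hab⟩ := hS
  obtain ⟨x, hx, rfl⟩ : a ∈ (φ.comp K.subtype).ker.map f := hφ ▸ Subgroup.mem_top a
  obtain ⟨y, hy, rfl⟩ : b ∈ (ψ.comp K.subtype).ker.map f := hψ ▸ Subgroup.mem_top b
  exact absurd (Commute.map (Subtype.ext (hcomm x hx y hy) : Commute x y) f).eq hab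

end IsSubquotient

end Subquotients

section SylowLifts

open Subgroup

variable {G T : Type*} [Group G] [Finite G] [Group T] {ℓ : ℕ} [Fact ℓ.Prime] {f : G →* T}

theorem map_sylow_eq_top (hf : Function.Surjective f) (hT : IsPGroup ℓ T) (P : Sylow ℓ G) :
    (P : Subgroup G).map f = ⊤ :=
  top_le_iff.mp <| (hT.to_subgroup ⊤).le_sylow_of_normal (P.mapSurjective hf)

-- Frattini's argument for a Sylow `ℓ`-subgroup of the preimage of `E`.
theorem exists_isPGroup_map_eq_and_map_normalizer_eq_top (hf : Function.Surjective f)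
    (E : Subgroup T) [E.Normal] (hE : IsPGroup ℓ E) :
    ∃ P : Subgroup G, IsPGroup ℓ P ∧ P.map f = E ∧ (normalizer (P : Set G)).map f = ⊤ := by
  obtain ⟨Q⟩ := (inferInstance : Nonempty (Sylow ℓ (E.comap f)))
  have hmap : ((Q : Subgroup _).map (E.comap f).subtype).map f = E := by
    have hQ := map_sylow_eq_top (f.subgroupComap_surjective_of_surjective E hf) hE Q
    have h := congrArg (Subgroup.map E.subtype) hQ
    rw [Subgroup.map_map, ← MonoidHom.range_eq_map, range_subtype] at h
    rwa [Subgroup.map_map]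
  refine ⟨(Q : Subgroup _).map (E.comap f).subtype, Q.2.map _, hmap, ?_⟩
  have hfrattini := congrArg (Subgroup.map f) Q.normalizer_sup_eq_top
  rw [Subgroup.map_sup, map_comap_eq_self_of_surjective hf, map_top_of_surjective f hf] at hfrattini
  rwa [sup_eq_left.mpr (hmap.ge.trans (map_mono le_normalizer))] at hfrattini

end SylowLifts

section LinearPGroups

open Module Subgroup

variable {k G V E T : Type*} [Field k] [Group G] [AddCommGroup V] [Module k V]
  [Group E] [Group T] {ρ : Representation k G V} {ℓ : ℕ} [Fact ℓ.Prime]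

theorem natCast_card_ne_zero_of_isPGroup [Finite E] (hE : IsPGroup ℓ E) (hℓ : (ℓ : k) ≠ 0) :
    (Nat.card E : k) ≠ 0 := by
  obtain ⟨n, hn⟩ := IsPGroup.iff_card.mp hE
  simpa [hn] using pow_ne_zero n hℓ

variable [IsAlgClosed k] [FiniteDimensional k V] [Finite G]

theorem exists_isMulCommutative_index_dvd_factorial_of_isPGroup (hG : IsPGroup ℓ G)
    (hρ : Function.Injective ρ) (hℓ : (ℓ : k) ≠ 0) :
    ∃ A : Subgroup G, IsMulCommutative A ∧ A.index ∣ (finrank k V).factorial := by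
  have := hG.isNilpotent
  obtain ⟨A, _, hA, hCA⟩ := exists_normal_isMulCommutative_centralizer_le G
  exact ⟨A, hA, (index_dvd_of_le hCA).trans <| index_centralizer_dvd_factorial_finrank hρ <|
    natCast_card_ne_zero_of_isPGroup (hG.to_subgroup A) hℓ⟩

theorem isMulCommutative_of_isPGroup_of_finrank_lt (hG : IsPGroup ℓ G)
    (hρ : Function.Injective ρ) (hℓ : (ℓ : k) ≠ 0) (hV : finrank k V < ℓ) :
    IsMulCommutative G := by
  obtain ⟨A, hA, hdvd⟩ := exists_isMulCommutative_index_dvd_factorial_of_isPGroup hG hρ hℓ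
  obtain ⟨j, hj⟩ := hG.index A
  have hcop : Nat.Coprime A.index (finrank k V).factorial :=
    hj ▸ ((Fact.out : ℓ.Prime).coprime_factorial_of_lt hV).pow_left j
  obtain rfl : A = ⊤ := index_eq_one.mp (hcop.eq_one_of_dvd hdvd)
  exact .of_comm fun a b ↦ setLike_mul_comm (mem_top a) (mem_top b)

theorem pow_factorial_finrank_mem_centralizer_of_isPGroup (P : Subgroup G) [P.Normal]
    (hP : IsPGroup ℓ P) (hρ : Function.Injective ρ) (hℓ : (ℓ : k) ≠ 0) (hV : finrank k V < ℓ)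
    (g : G) : g ^ (finrank k V).factorial ∈ centralizer (P : Set G) := by
  have hPρ : Function.Injective (ρ.comp P.subtype) := hρ.comp P.subtype_injective
  have := isMulCommutative_of_isPGroup_of_finrank_lt hP hPρ hℓ hV
  obtain ⟨c, hc⟩ := index_centralizer_dvd_factorial_finrank hρ
    (natCast_card_ne_zero_of_isPGroup hP hℓ)
  rw [hc, pow_mul]
  exact pow_mem (pow_index_mem _ g) c

namespace IsSubquotient

theorem exists_isMulCommutative_index_dvd_factorial_finrank
    (h : IsSubquotient E G) (hE : IsPGroup ℓ E) (hρ : Function.Injective ρ) (hℓ : (ℓ : k) ≠ 0) :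
    ∃ B : Subgroup E, IsMulCommutative B ∧ B.index ∣ (finrank k V).factorial := by
  obtain ⟨K, f, hf⟩ := h
  obtain ⟨P⟩ := (inferInstance : Nonempty (Sylow ℓ K))
  have hPρ : Function.Injective (ρ.comp (K.subtype.comp (P : Subgroup K).subtype)) :=
    hρ.comp (K.subtype_injective.comp (P : Subgroup K).subtype_injective)
  obtain ⟨A, hA, hdvd⟩ := exists_isMulCommutative_index_dvd_factorial_of_isPGroup P.2 hPρ hℓ
  have hfP : Function.Surjective (f.comp (P : Subgroup K).subtype) := by
    rw [← MonoidHom.range_eq_top, MonoidHom.range_comp, range_subtype, map_sylow_eq_top hf hE]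
  exact ⟨A.map (f.comp (P : Subgroup K).subtype), inferInstance, (A.index_map_dvd hfP).trans hdvd⟩

theorem pow_factorial_finrank_mem_centralizer (h : IsSubquotient T G) (E : Subgroup T) [E.Normal]
    (hE : IsPGroup ℓ E) (hρ : Function.Injective ρ) (hℓ : (ℓ : k) ≠ 0) (hV : finrank k V < ℓ)
    (t : T) : t ^ (finrank k V).factorial ∈ centralizer (E : Set T) := by
  obtain ⟨K, f, hf⟩ := h
  obtain ⟨P, hP, rfl, htop⟩ := exists_isPGroup_map_eq_and_map_normalizer_eq_top hf E hE
  let N := normalizer (P : Set K)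
  obtain ⟨x, hx, rfl⟩ : t ∈ N.map f := htop ▸ mem_top t
  have hNρ : Function.Injective (ρ.comp (K.subtype.comp N.subtype)) :=
    hρ.comp (K.subtype_injective.comp N.subtype_injective)
  have hcent := pow_factorial_finrank_mem_centralizer_of_isPGroup (P.subgroupOf N)
    (hP.comap_subtype) hNρ hℓ hV ⟨x, hx⟩
  rintro _ ⟨y, hy, rfl⟩
  have hxy := congrArg Subtype.val (hcent ⟨y, le_normalizer hy⟩ hy)
  simpa using congrArg f hxy

end IsSubquotient

end LinearPGroups

section GeneralLinearGroups

variable {n R R₁ R₂ : Type*} [Fintype n] [DecidableEq n] [CommRing R] [CommRing R₁] [CommRing R₂]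

theorem map_coe_sub_one_eq_zero_of_mem_ker {f : R →+* R₁} {A : GL n R}
    (hA : A ∈ (GeneralLinearGroup.map f).ker) (i j : n) : f ((A.1 - 1) i j) = 0 := by
  have h : f.mapMatrix A.1 = 1 := congrArg Units.val (MonoidHom.mem_ker.mp hA)
  have h' : f.mapMatrix (A.1 - 1) = 0 := by rw [map_sub, h, map_one, sub_self]
  exact congrFun (congrFun h' i) j

-- `(A - 1) * (B - 1) = 0 = (B - 1) * (A - 1)`.
theorem commute_of_mem_ker_generalLinearGroup_map {f₁ : R →+* R₁} {f₂ : R →+* R₂}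
    (h : ∀ x y, f₁ x = 0 → f₂ y = 0 → x * y = 0) {A B : GL n R}
    (hA : A ∈ (GeneralLinearGroup.map f₁).ker) (hB : B ∈ (GeneralLinearGroup.map f₂).ker) :
    Commute A B := by
  have hA' := map_coe_sub_one_eq_zero_of_mem_ker hA
  have hB' := map_coe_sub_one_eq_zero_of_mem_ker hB
  have hAB : (A.1 - 1) * (B.1 - 1) = 0 := by
    ext i j
    exact Finset.sum_eq_zero fun l _ ↦ h _ _ (hA' i l) (hB' l j)
  have hBA : (B.1 - 1) * (A.1 - 1) = 0 := by
    ext i j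
    exact Finset.sum_eq_zero fun l _ ↦ (mul_comm _ _).trans (h _ _ (hA' l j) (hB' i l))
  refine Units.ext ?_
  have hcomm : Commute (A.1 - 1) (B.1 - 1) := hAB.trans hBA.symm
  change Commute A.1 B.1
  simpa using (hcomm.add_left (.one_left _)).add_right (.one_right _)

theorem mul_eq_zero_of_castHom_eq_zero_s10 {a b : ℕ} {x y : ZMod (a * b)}
    (hx : ZMod.castHom (Dvd.intro b rfl) (ZMod a) x = 0)
    (hy : ZMod.castHom (Dvd.intro_left a rfl) (ZMod b) y = 0) : x * y = 0 := by
  obtain ⟨x, rfl⟩ := ZMod.intCast_surjective x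
  obtain ⟨y, rfl⟩ := ZMod.intCast_surjective y
  rw [map_intCast, ZMod.intCast_zmod_eq_zero_iff_dvd] at hx hy
  rw [← Int.cast_mul, ZMod.intCast_zmod_eq_zero_iff_dvd, Nat.cast_mul]
  exact mul_dvd_mul hx hy

theorem IsSubquotient.exists_prime_dvd_of_generalLinearGroup_zmod {S : Type*} [Group S]
    [IsSimpleGroup S] (hS : ∃ a b : S, a * b ≠ b * a) {m : ℕ} (hm : m ≠ 0)
    (h : IsSubquotient S (GL n (ZMod m))) :
    ∃ p, p.Prime ∧ p ∣ m ∧ IsSubquotient S (GL n (ZMod p)) := by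
  induction m using induction_on_primes with
  | zero => contradiction
  | one =>
    obtain ⟨K, f, hf⟩ := h
    have : Subsingleton (ZMod 1) := inferInstanceAs (Subsingleton (Fin 1))
    exact (not_subsingleton S hf.subsingleton).elim
  | prime_mul p a hp ih =>
    obtain h | h := of_commute_ker hS h
      (GeneralLinearGroup.map (ZMod.castHom (Dvd.intro a rfl) (ZMod p)))
      (GeneralLinearGroup.map (ZMod.castHom (Dvd.intro_left p rfl) (ZMod a)))
      fun A hA B hB ↦ commute_of_mem_ker_generalLinearGroup_map
        (fun _ _ ↦ mul_eq_zero_of_castHom_eq_zero_s10) hA hB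
    · exact ⟨p, hp, dvd_mul_right p a, h⟩
    · obtain ⟨q, hq, hqa, h⟩ := ih (right_ne_zero_of_mul hm) h
      exact ⟨q, hq, hqa.mul_left p, h⟩

theorem exists_injective_representation_generalLinearGroup (n F k : Type*) [Fintype n]
    [DecidableEq n] [Field F] [Field k] [Algebra F k] :
    ∃ ρ : Representation k (GL n F) (n → k), Function.Injective ρ :=
  ⟨toLinAlgEquiv'.toMulEquiv.toMonoidHom.comp
      ((algebraMap F k).mapMatrix.toMonoidHom.comp (Units.coeHom _)),
    toLinAlgEquiv'.injective.comp
      ((Matrix.map_injective (algebraMap F k).injective).comp Units.val_injective)⟩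

end GeneralLinearGroups

section Centralizers

open Subgroup

theorem le_relIndex_of_le_card_of_le_index {L M T : Type*} [Group L] [Group M] [Group T]
    {φ : L →* T} {ψ : M →* T} {B E : Subgroup T} [IsMulCommutative B] [B.IsFiniteRelIndex E]
    (hφE : φ.range ≤ E) (hψE : ψ.range ≤ E) {c : ℕ}
    (hL : c ≤ Nat.card L) (hM : ∀ b ≠ 1, c ≤ ((centralizer {φ b}).comap ψ).index) :
    c ≤ B.relIndex E := by
  have hφ := relIndex_le_of_le_right hφE (H := B) relIndex_ne_zero
  have hψ := relIndex_le_of_le_right hψE (H := B) relIndex_ne_zero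
  have : (B.comap ψ).FiniteIndex :=
    ⟨index_comap B ψ ▸ mt (relIndex_eq_zero_of_le_right hψE) relIndex_ne_zero⟩
  rw [← index_comap] at hφ hψ
  by_cases hbot : B.comap φ = ⊥
  · rw [hbot, index_bot] at hφ
    exact hL.trans hφ
  · obtain ⟨b, hb, hb1⟩ := (bot_or_exists_ne_one _).resolve_left hbot
    have hcent : B.comap ψ ≤ (centralizer {φ b}).comap ψ := fun x hx ↦
      mem_centralizer_singleton_iff.mpr (setLike_mul_comm (mem_comap.mp hx) (mem_comap.mp hb))
    exact (hM b hb1).trans ((index_antitone hcent).trans hψ)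

end Centralizers

section Symplectic

theorem natCard_ker_proj {l : Type*} [Fintype l] (o : l) (F : Type*) [Field F] :
    Nat.card (LinearMap.ker (LinearMap.proj o : (l → F) →ₗ[F] F)) =
      Nat.card F ^ (Fintype.card l - 1) := by
  have hne : (LinearMap.proj o : Module.Dual F (l → F)) ≠ 0 := fun h ↦ by
    simpa using LinearMap.congr_fun h 1
  have h := Module.Dual.finrank_ker_add_one_of_ne_zero hne
  rw [Module.finrank_fintype_fun_eq_card] at h
  rw [Module.natCard_eq_pow_finrank (K := F), ← h, Nat.add_sub_cancel]

open SymplecticGroup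

variable (l R : Type*) [CommRing R]

/-- The `R`-module of symmetric matrices. -/
def symmetricMatrices : Submodule R (Matrix l l R) where
  carrier := {S | S.IsSymm}
  add_mem' := IsSymm.add
  zero_mem' := isSymm_zero
  smul_mem' c _ h := h.smul c

variable {l R} in
theorem exists_symmetricMatrices_col_eq (o : l) (r : l → R) :
    ∃ S : symmetricMatrices l R, ∀ i, S.1 i o = r i := by
  classical
  let e : l → R := Pi.single o 1
  refine ⟨⟨vecMulVec r e + vecMulVec e r - r o • vecMulVec e e, ?_⟩, fun i ↦ ?_⟩
  · ext i j
    simp only [transpose_apply, Matrix.sub_apply, Matrix.add_apply, vecMulVec_apply,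
      Matrix.smul_apply, smul_eq_mul]
    ring
  · simp only [Matrix.sub_apply, Matrix.add_apply, vecMulVec_apply, Pi.single_eq_same, mul_one,
      Matrix.smul_apply, smul_eq_mul, e]
    ring

variable [DecidableEq l] [Fintype l]

/-- The quotient of the symplectic group by its center; `PSp g ℓ` is the case `l = Fin g`,
`R = ZMod ℓ`. -/
abbrev ProjectiveSymplecticGroup : Type _ :=
  symplecticGroup l R ⧸ Subgroup.center (symplecticGroup l R)

/-- The Levi subgroup of the symplectic group: `GL l R` acting on both standard Lagrangian
subspaces. -/
def levi : GL l R →* symplecticGroup l R where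
  toFun A := ⟨fromBlocks A 0 0 (A⁻¹ : GL l R).1ᵀ, by
    have hA : A.1ᵀ * (A⁻¹ : GL l R).1ᵀ = 1 := by
      rw [← transpose_mul, Units.inv_mul, transpose_one]
    simp only [fromBlocks_mem_iff, hA, transpose_zero, mul_zero, zero_mul, sub_zero, and_self]⟩
  map_one' := Subtype.ext <| by simp
  map_mul' A B := Subtype.ext <| by simp [fromBlocks_multiply]

/-- The unipotent radical of the Siegel parabolic subgroup of the symplectic group, parametrized by
symmetric matrices. -/
def siegel : Multiplicative (symmetricMatrices l R) →* symplecticGroup l R where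
  toFun S := ⟨fromBlocks 1 S.toAdd.1 0 1, by
    have hS : S.toAdd.1ᵀ = S.toAdd.1 := S.toAdd.2
    simp [fromBlocks_mem_iff, hS]⟩
  map_one' := Subtype.ext <| by simp
  map_mul' S T := Subtype.ext <| by simp [fromBlocks_multiply, add_comm]

variable {l R}

/-- The action `S ↦ A * S * Aᵀ` of `GL l R` on symmetric matrices. -/
def congruence (A : GL l R) (S : symmetricMatrices l R) : symmetricMatrices l R :=
  ⟨A * S * A.1ᵀ, by
    have hS : S.1ᵀ = S.1 := S.2
    change (A.1 * S.1 * A.1ᵀ)ᵀ = _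
    simp [transpose_mul, hS, mul_assoc]⟩

theorem levi_mul_siegel (A : GL l R) (S : symmetricMatrices l R) :
    levi l R A * siegel l R (.ofAdd S) = siegel l R (.ofAdd (congruence A S)) * levi l R A := by
  have hA : A.1ᵀ * (A⁻¹ : GL l R).1ᵀ = 1 := by
    rw [← transpose_mul, Units.inv_mul, transpose_one]
  refine Subtype.ext ?_
  simp [levi, siegel, congruence, fromBlocks_multiply, mul_assoc, hA, -coe_units_inv]

theorem siegel_mem_center_iff {S : symmetricMatrices l R} :
    siegel l R (.ofAdd S) ∈ Subgroup.center (symplecticGroup l R) ↔ S = 0 := by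
  refine ⟨fun h ↦ Subtype.ext ?_, fun h ↦ ?_⟩
  · have hJ := congrArg Subtype.val (Subgroup.mem_center_iff.mp h (symJ l R))
    have hJ' : J l R * fromBlocks 1 S.1 0 1 = fromBlocks 1 S.1 0 1 * J l R := hJ
    rw [J, fromBlocks_multiply, fromBlocks_multiply, fromBlocks_inj] at hJ'
    simpa using hJ'.1.symm
  · rw [h, ofAdd_zero, map_one]
    exact one_mem _

variable (l R)

/-- The Levi subgroup, mapped to the projective symplectic group. -/
def leviMod : GL l R →* ProjectiveSymplecticGroup l R :=
  (QuotientGroup.mk' _).comp (levi l R)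

/-- The Siegel unipotent radical, mapped to the projective symplectic group. -/
def siegelMod : Multiplicative (symmetricMatrices l R) →* ProjectiveSymplecticGroup l R :=
  (QuotientGroup.mk' _).comp (siegel l R)

variable {l R}

theorem leviMod_mul_siegelMod (A : GL l R) (S : symmetricMatrices l R) :
    leviMod l R A * siegelMod l R (.ofAdd S) =
      siegelMod l R (.ofAdd (congruence A S)) * leviMod l R A :=
  congrArg (QuotientGroup.mk' _) (levi_mul_siegel A S)

theorem siegelMod_injective : Function.Injective (siegelMod l R) := by
  rw [injective_iff_map_eq_one]
  intro S hS
  exact siegel_mem_center_iff.mp ((QuotientGroup.eq_one_iff _).mp hS)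

theorem commute_leviMod_siegelMod_iff {A : GL l R} {S : symmetricMatrices l R} :
    Commute (leviMod l R A) (siegelMod l R (.ofAdd S)) ↔ congruence A S = S := by
  rw [commute_iff_eq, leviMod_mul_siegelMod, mul_left_inj, siegelMod_injective.eq_iff,
    EmbeddingLike.apply_eq_iff_eq]

theorem range_leviMod_le_normalizer :
    (leviMod l R).range ≤ Subgroup.normalizer ((siegelMod l R).range : Set _) := by
  rw [Subgroup.le_normalizer_iff]
  rintro _ ⟨A, rfl⟩ _ ⟨S, rfl⟩
  exact ⟨.ofAdd (congruence A S.toAdd), eq_mul_inv_of_mul_eq (leviMod_mul_siegelMod A _).symm⟩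

theorem isPGroup_range_siegelMod (p : ℕ) : IsPGroup p (siegelMod l (ZMod p)).range :=
  ZModModule.isPGroup_multiplicative.of_surjective _ (siegelMod l (ZMod p)).rangeRestrict_surjective

section Transvections

variable (R) (o : l)

/-- The transvections `1 + v ⊗ o*` of `l → R`, for `v` in the kernel of the coordinate `o*`. -/
def transvectionHom :
    Multiplicative (LinearMap.ker (LinearMap.proj o : (l → R) →ₗ[R] R)) →* GL l R :=
  MonoidHom.toHomUnits
    { toFun v := 1 + vecMulVec v.toAdd.1 (Pi.single o 1)
      map_one' := by simp
      map_mul' v w := by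
        have hw : w.toAdd.1 o = 0 := w.toAdd.2
        simp [add_mul, mul_add, vecMulVec_mul_vecMulVec, hw, add_vecMulVec, add_assoc] }

variable {R o}

theorem apply_eq_zero_of_congruence_transvectionHom_eq [IsDomain R] (h2 : (2 : R) ≠ 0)
    {v : LinearMap.ker (LinearMap.proj o : (l → R) →ₗ[R] R)} (hv : v ≠ 0)
    {S : symmetricMatrices l R}
    (h : congruence (transvectionHom R o (.ofAdd v)) S = S) (j : l) : S.1 j o = 0 := by
  have hvo : v.1 o = 0 := v.2
  obtain ⟨i, hi⟩ := Function.ne_iff.mp (fun h ↦ hv (Subtype.ext h) : v.1 ≠ 0)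
  have hentry (j : l) : v.1 i * S.1 j o + S.1 i o * v.1 j + v.1 i * v.1 j * S.1 o o = 0 := by
    have hij := congrFun (congrFun (congrArg Subtype.val h) i) j
    have hSo : S.1 o j = S.1 j o := S.2.apply j o
    have hAS : (congruence (transvectionHom R o (.ofAdd v)) S).1 =
        (1 + vecMulVec v.1 (Pi.single o 1)) * S.1 * (1 + vecMulVec v.1 (Pi.single o 1))ᵀ := rfl
    rw [hAS] at hij
    simp only [add_mul, one_mul, vecMulVec_mul, single_vecMul, one_smul, transpose_add,
      transpose_one, transpose_vecMulVec, mul_add, mul_one, mul_vecMulVec, mulVec_single,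
      MulOpposite.op_one, Matrix.add_apply, vecMulVec_apply, row_apply, hSo, col_apply] at hij
    linear_combination hij
  have ho : S.1 o o = 0 := by simpa [hvo, show v.1 i ≠ 0 from hi] using hentry o
  have hi' : S.1 i o = 0 := by
    have h : 2 * v.1 i * S.1 i o = 0 := by linear_combination hentry i - v.1 i * v.1 i * ho
    simpa [h2, show v.1 i ≠ 0 from hi] using h
  simpa [ho, hi', show v.1 i ≠ 0 from hi] using hentry j

theorem card_le_index_comap_centralizer_leviMod_transvectionHom [IsDomain R] [Finite R]
    (h2 : (2 : R) ≠ 0) {v : Multiplicative (LinearMap.ker (LinearMap.proj o : (l → R) →ₗ[R] R))}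
    (hv : v ≠ 1) :
    Nat.card (l → R) ≤
      ((Subgroup.centralizer {leviMod l R (transvectionHom R o v)}).comap
        (siegelMod l R)).index := by
  let col : symmetricMatrices l R →+ (l → R) :=
    { toFun S i := S.1 i o
      map_zero' := rfl
      map_add' _ _ := rfl }
  have hcol : Function.Surjective col := fun r ↦
    let ⟨S, hS⟩ := exists_symmetricMatrices_col_eq o r
    ⟨S, funext hS⟩
  have hle : (Subgroup.centralizer {leviMod l R (transvectionHom R o v)}).comap (siegelMod l R) ≤
      (AddMonoidHom.toMultiplicative col).ker := by
    intro S hS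
    exact funext (apply_eq_zero_of_congruence_transvectionHom_eq h2 hv
      (commute_leviMod_siegelMod_iff.mp (Subgroup.mem_centralizer_singleton_iff.mp hS).symm))
  calc Nat.card (l → R)
    _ = (AddMonoidHom.toMultiplicative col).ker.index := by
      rw [Subgroup.index_ker, MonoidHom.range_eq_top.mpr hcol, Subgroup.card_top]
      rfl
    _ ≤ _ := Subgroup.index_antitone hle

variable (R o)

/-- The subgroup of the projective symplectic group generated by the transvections
`1 + v ⊗ o*` in the Levi subgroup and the Siegel unipotent radical. Over `ZMod ℓ` it is an `ℓ`-group
without abelian subgroups of small index. -/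
def transvectionSiegel : Subgroup (ProjectiveSymplecticGroup l R) :=
  ((leviMod l R).comp (transvectionHom R o)).range ⊔ (siegelMod l R).range

theorem isPGroup_transvectionSiegel (p : ℕ) : IsPGroup p (transvectionSiegel (ZMod p) o) := by
  refine IsPGroup.to_sup_of_normal_right' ?_ (isPGroup_range_siegelMod p) ?_
  · exact ZModModule.isPGroup_multiplicative.of_surjective _ (MonoidHom.rangeRestrict_surjective _)
  · exact ((MonoidHom.range_comp _ _).trans_le (Subgroup.map_le_range _ _)).trans
      range_leviMod_le_normalizer

theorem natCard_pow_le_index_of_isMulCommutative {F : Type*} [Field F] [Finite F]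
    (h2 : (2 : F) ≠ 0) (B : Subgroup (transvectionSiegel F o)) [IsMulCommutative B] :
    Nat.card F ^ (Fintype.card l - 1) ≤ B.index := by
  have hB : (B.map (transvectionSiegel F o).subtype).relIndex (transvectionSiegel F o) =
      B.index := by
    rw [Subgroup.relIndex, Subgroup.subgroupOf,
      Subgroup.comap_map_eq_self_of_injective (Subgroup.subtype_injective _)]
  have : (B.map (transvectionSiegel F o).subtype).IsFiniteRelIndex (transvectionSiegel F o) :=
    ⟨hB ▸ Subgroup.index_ne_zero_of_finite⟩
  rw [← natCard_ker_proj o F, ← hB]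
  exact le_relIndex_of_le_card_of_le_index (E := transvectionSiegel F o)
    le_sup_left le_sup_right le_rfl
    fun v hv ↦ (Finite.card_subtype_le _).trans
      (card_le_index_comap_centralizer_leviMod_transvectionHom h2 hv)

end Transvections

end Symplectic

section Bounds

open Module

variable {k G V l : Type*} [Field k] [IsAlgClosed k] [AddCommGroup V] [Module k V]
  [FiniteDimensional k V] [Group G] [Finite G] [Fintype l] [DecidableEq l]
  {ρ : Representation k G V} {ℓ : ℕ} [Fact ℓ.Prime]

namespace IsSubquotient

theorem sub_one_mul_card_sub_one_lt_finrank
    (h : IsSubquotient (ProjectiveSymplecticGroup l (ZMod ℓ)) G) (hρ : Function.Injective ρ)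
    (hℓ : (ℓ : k) ≠ 0) (h2 : ℓ ≠ 2) (hV : finrank k V ≠ 0) :
    (ℓ - 1) * (Fintype.card l - 1) < finrank k V := by
  refine lt_of_le_of_lt (Nat.mul_le_mul_left _ ?_)
    (sub_one_mul_padicValNat_factorial_lt_of_ne_zero ℓ hV)
  cases isEmpty_or_nonempty l
  · simp
  let o : l := Classical.arbitrary l
  have hE := isPGroup_transvectionSiegel o ℓ
  obtain ⟨B, hB, hdvd⟩ := (h.subgroup (transvectionSiegel (ZMod ℓ) o))
    |>.exists_isMulCommutative_index_dvd_factorial_finrank hE hρ hℓ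
  obtain ⟨j, hj⟩ := hE.index B
  have h2' : (2 : ZMod ℓ) ≠ 0 := Ring.two_ne_zero (by rwa [ZMod.ringChar_zmod_n])
  have hle := natCard_pow_le_index_of_isMulCommutative o h2' B
  rw [Nat.card_zmod, hj, Nat.pow_le_pow_iff_right (Fact.out : ℓ.Prime).one_lt] at hle
  rw [hj, padicValNat_dvd_iff_le (Nat.factorial_ne_zero _)] at hdvd
  exact hle.trans hdvd

theorem congruence_pow_factorial_finrank_eq
    (h : IsSubquotient (ProjectiveSymplecticGroup l (ZMod ℓ)) G) (hρ : Function.Injective ρ)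
    (hℓ : (ℓ : k) ≠ 0) (hV : finrank k V < ℓ) (A : GL l (ZMod ℓ))
    (S : symmetricMatrices l (ZMod ℓ)) : congruence (A ^ (finrank k V).factorial) S = S := by
  let N := (siegelMod l (ZMod ℓ)).range
  have hN : IsPGroup ℓ (N.subgroupOf (Subgroup.normalizer (N : Set _))) :=
    (isPGroup_range_siegelMod ℓ).comap_subtype
  have hcent := (h.subgroup (Subgroup.normalizer (N : Set _)))
    |>.pow_factorial_finrank_mem_centralizer _ hN hρ hℓ hV
      ⟨leviMod l _ A, range_leviMod_le_normalizer ⟨A, rfl⟩⟩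
  rw [← commute_leviMod_siegelMod_iff, map_pow]
  exact (congrArg Subtype.val (hcent ⟨siegelMod l _ (.ofAdd S),
    Subgroup.le_normalizer ⟨_, rfl⟩⟩ ⟨_, rfl⟩)).symm

theorem pow_two_mul_factorial_finrank_eq_one [Nonempty l]
    (h : IsSubquotient (ProjectiveSymplecticGroup l (ZMod ℓ)) G) (hρ : Function.Injective ρ)
    (hℓ : (ℓ : k) ≠ 0) (hV : finrank k V < ℓ) (u : (ZMod ℓ)ˣ) :
    u ^ (2 * (finrank k V).factorial) = 1 := by
  have hcongr := congrArg Subtype.val <| h.congruence_pow_factorial_finrank_eq hρ hℓ hV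
    (GeneralLinearGroup.scalar l u) ⟨1, isSymm_one⟩
  have hentry := congrFun (congrFun hcongr (Classical.arbitrary l)) (Classical.arbitrary l)
  refine Units.ext ?_
  rw [← map_pow] at hentry
  simpa [congruence, two_mul, pow_add, diagonal_pow] using hentry

end IsSubquotient

end Bounds

theorem exists_units_zmod_pow_four_ne_one {ℓ : ℕ} [Fact ℓ.Prime] (h5 : 5 < ℓ) :
    ∃ u : (ZMod ℓ)ˣ, u ^ 4 ≠ 1 := by
  have hdvd {n : ℕ} (hn : (n : ZMod ℓ) = 0) : ℓ ∣ n := (ZMod.natCast_eq_zero_iff n ℓ).mp hn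
  have h2 : (2 : ZMod ℓ) ≠ 0 := fun h ↦ by
    have := Nat.le_of_dvd two_pos (hdvd (n := 2) (mod_cast h))
    omega
  refine ⟨Units.mk0 2 h2, fun h ↦ ?_⟩
  have h16 : (2 : ZMod ℓ) ^ 4 = 1 := congrArg Units.val h
  have h15 : ℓ ∣ 3 * 5 := hdvd (by push_cast; linear_combination h16)
  obtain h3 | h5' := (Fact.out : ℓ.Prime).dvd_mul.mp h15
  · exact absurd (Nat.le_of_dvd three_pos h3) (by omega)
  · exact absurd (Nat.le_of_dvd (by omega) h5') (by omega)

theorem stmt_10_general (g m ℓ : ℕ) (hg : 1 ≤ g) (hℓ : ℓ.Prime) (h5 : 5 < ℓ)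
    (hndvd : ¬ ℓ ∣ m) :
    ¬ MemOcc (GL (Fin g ⊕ Fin g) (ZMod m)) (PSp g ℓ) := by
  rintro ⟨_, hS, hsub⟩
  have := Fact.mk hℓ
  have hm : m ≠ 0 := fun h ↦ hndvd (h ▸ dvd_zero ℓ)
  obtain ⟨p, hp, hpm, h⟩ := IsSubquotient.exists_prime_dvd_of_generalLinearGroup_zmod hS hm hsub
  have := Fact.mk hp
  obtain ⟨ρ, hρ⟩ := exists_injective_representation_generalLinearGroup (Fin g ⊕ Fin g) (ZMod p)
    (AlgebraicClosure (ZMod p))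
  have hℓp : (ℓ : AlgebraicClosure (ZMod p)) ≠ 0 := fun h0 ↦ hndvd <| by
    rwa [← (Nat.prime_dvd_prime_iff_eq hp hℓ).mp ((CharP.cast_eq_zero_iff _ p ℓ).mp h0)]
  have hdim : Module.finrank (AlgebraicClosure (ZMod p))
      (Fin g ⊕ Fin g → AlgebraicClosure (ZMod p)) = 2 * g := by simp [two_mul]
  obtain rfl | hg2 := hg.eq_or_lt
  · obtain ⟨u, hu⟩ := exists_units_zmod_pow_four_ne_one h5
    have hu' := h.pow_two_mul_factorial_finrank_eq_one hρ hℓp (by omega) u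
    rw [hdim] at hu'
    exact hu hu'
  · have hlt := h.sub_one_mul_card_sub_one_lt_finrank hρ hℓp (by omega) (by omega)
    rw [hdim, Fintype.card_fin] at hlt
    have hle : 5 * (g - 1) ≤ (ℓ - 1) * (g - 1) := Nat.mul_le_mul_right _ (by omega)
    omega

/-- For a prime `ℓ > 5` not dividing `m`,
`PSp_{2g}(ℤ/ℓℤ) ∉ Occ(GSp_{2g}(ℤ/mℤ))`. -/
theorem stmt_10 (g m ℓ : ℕ) (hg : 1 ≤ g) (hm : 0 < m) (hℓ : ℓ.Prime) (h5 : 5 < ℓ)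
    (hndvd : ¬ ℓ ∣ m) :
    ¬ MemOcc ↥(GSp g m) (PSp g ℓ) := fun h ↦
  stmt_10_general g m ℓ hg hℓ h5 hndvd
    ⟨h.1, h.2.1, IsSubquotient.map h.2.2 (GSp g m).subtype (Subgroup.subtype_injective _)⟩
end

section
/- Every matrix A ∈ M_n(ℤ/ℓℤ) with trace zero can be written as a sum of four matrices each of whose squares is the zero matrix. -/
/-!
Let `p` be an idempotent with `p * a + a * p = a`. Then `p * a * p = 0`, so `p * a` and `a * p` are
square-zero with sum `a`. This yields two families of sums of two square-zero elements:

* nilpotent endomorphisms `N`: a splitting `V = V₀ ⊕ V₁` with `N V₀ ≤ V₁` and `N V₁ ≤ V₀` is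
  extended step by step along the images of `N`, and `p` is the projection onto `V₀`;
* when `2` is invertible, elements `a` that anticommute with an involution `s`: `p = (1 + s) / 2`.

A non-scalar endomorphism of trace zero is a sum of two nilpotent ones: in a suitable splitting
`V = ⟨v⟩ ⊕ H` it is `[0, r; c, g]` with `g` again non-scalar or zero, and if `g = N₁ + N₂` then
`[0, r; 0, N₁]` and `[0, 0; c, N₂]` are nilpotent.

A nonzero scalar matrix has trace zero only if its size `n` vanishes in the field, so that diagonal
entries may be read off a ring homomorphism `e : ℤ/n → F`. If `2 ≠ 0`, then `1` is the sum of the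
diagonal matrices `e` and `1 - e`, which the permutations `i ↦ -i` and `i ↦ 2 - i` turn into their
negatives. If `2 = 0`, then `1 = (1 + S) + S` for the permutation matrix `S` of `i ↦ 1 - i`; here
`(1 + S) ^ 2 = 0`, and the diagonal matrix `e` is a suitable idempotent for `S`.
-/

open Module

/-- `a` is a sum of `k` elements of square zero. -/
def IsSumSqZero {R : Type*} [Semiring R] (k : ℕ) (a : R) : Prop :=
  ∃ x : Fin k → R, (∀ i, x i ^ 2 = 0) ∧ a = ∑ i, x i

namespace IsSumSqZero

section Semiring

variable {R S : Type*} [Semiring R] [Semiring S] {k l : ℕ} {a b : R}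

theorem of_sq_eq_zero (ha : a ^ 2 = 0) : IsSumSqZero 1 a :=
  ⟨fun _ ↦ a, fun _ ↦ ha, by simp⟩

theorem add (ha : IsSumSqZero k a) (hb : IsSumSqZero l b) : IsSumSqZero (k + l) (a + b) := by
  obtain ⟨x, hx, rfl⟩ := ha
  obtain ⟨y, hy, rfl⟩ := hb
  exact ⟨Fin.append x y, Fin.addCases (by simpa using hx) (by simpa using hy),
    by simp [Fin.sum_univ_add]⟩

theorem map (φ : R →+* S) (ha : IsSumSqZero k a) : IsSumSqZero k (φ a) := by
  obtain ⟨x, hx, rfl⟩ := ha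
  exact ⟨φ ∘ x, fun i ↦ by simp [← map_pow, hx], by simp⟩

theorem smul {F : Type*} [CommSemiring F] [Algebra F R] (c : F) (ha : IsSumSqZero k a) :
    IsSumSqZero k (c • a) := by
  obtain ⟨x, hx, rfl⟩ := ha
  exact ⟨c • x, fun i ↦ by simp [smul_pow, hx], by simp [Finset.smul_sum]⟩

end Semiring

section Ring

variable {R : Type*} [Ring R] {p s a : R}

theorem of_isIdempotentElem (hp : IsIdempotentElem p) (ha : p * a + a * p = a) :
    IsSumSqZero 2 a := by
  have hpap : p * a * p = 0 := by
    have h : p * (p * a + a * p) = p * a := congrArg (p * ·) ha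
    rwa [mul_add, ← mul_assoc, hp.eq, ← mul_assoc, add_eq_left] at h
  rw [← ha]
  refine (of_sq_eq_zero ?_).add (of_sq_eq_zero ?_)
  · rw [sq, ← mul_assoc, hpap, zero_mul]
  · rw [sq, mul_assoc, ← mul_assoc p, hpap, mul_zero]

theorem of_anticommute [Invertible (2 : R)] (hs : s * s = 1) (hsa : s * a = -(a * s)) :
    IsSumSqZero 2 a := by
  have hcomm : Commute (⅟(2 : R)) a := (Nat.cast_commute 2 a).invOf_left
  refine of_isIdempotentElem (p := ⅟2 * (1 + s)) ?_ ?_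
  · have hsq : (1 + s) * (1 + s) = 2 * (1 + s) := by
      rw [two_mul, mul_add, add_mul, add_mul, hs]
      noncomm_ring
    have hcomm' : Commute (⅟(2 : R)) (1 + s) := (Nat.cast_commute 2 (1 + s)).invOf_left
    rw [IsIdempotentElem, hcomm'.symm.mul_mul_mul_comm, hsq, mul_assoc, invOf_mul_cancel_left]
  · have hadd : (1 + s) * a + a * (1 + s) = 2 * a := by
      rw [two_mul, add_mul, mul_add, hsa]
      noncomm_ring
    rw [mul_assoc, hcomm.symm.left_comm, ← mul_add, hadd, invOf_mul_cancel_left]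

end Ring

end IsSumSqZero

section Nilpotent

theorem exists_disjoint_sup_eq_sup_of_disjoint {α : Type*} [Lattice α] [BoundedOrder α]
    [IsModularLattice α] [ComplementedLattice α] {s t a b : α} (hst : Disjoint s t) (hs : s ≤ a)
    (ht : t ≤ b) : ∃ s' t', s ≤ s' ∧ s' ≤ a ∧ t ≤ t' ∧ t' ≤ b ∧ Disjoint s' t' ∧
      s' ⊔ t' = a ⊔ b := by
  have extend {u v c : α} (huv : Disjoint u v) (hu : u ≤ c) (hv : v ≤ c) :
      ∃ u', u ≤ u' ∧ u' ≤ c ∧ Disjoint u' v ∧ u' ⊔ v = c := by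
    obtain ⟨w, hd, rfl⟩ := IsModularLattice.exists_disjoint_and_sup_eq (sup_le hu hv)
    refine ⟨w ⊔ u, le_sup_right, sup_le le_sup_right hu,
      huv.disjoint_sup_left_of_disjoint_sup_right hd.symm, ?_⟩
    rw [sup_assoc, sup_comm]
  obtain ⟨s', hss', hs'a, hd, hsup⟩ :=
    extend (hst.mono_right (inf_le_left : t ⊓ a ≤ t)) hs inf_le_right
  have hs't : Disjoint s' t := fun x hxs hxt ↦ hd hxs (le_inf hxt (hxs.trans hs'a))
  obtain ⟨t', htt', ht'b, hd', hsup'⟩ :=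
    extend (hs't.symm.mono_right (inf_le_left : s' ⊓ b ≤ s')) ht inf_le_right
  refine ⟨s', t', hss', hs'a, htt', ht'b,
    fun x hxs hxt ↦ hd' hxt (le_inf hxs (hxt.trans ht'b)),
    le_antisymm (sup_le_sup hs'a ht'b) (sup_le ?_ ?_)⟩
  · rw [← hsup]
    exact sup_le le_sup_left ((inf_le_left.trans htt').trans le_sup_right)
  · rw [← hsup']
    exact sup_le le_sup_right (inf_le_left.trans le_sup_left)

variable {R M : Type*} [Ring R] [AddCommGroup M] [Module R M]

/-- `W₀` and `W₁` form a `ℤ/2`-grading of the submodule `U` for which `N` is odd. -/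
structure IsOddGrading (N : End R M) (U W₀ W₁ : Submodule R M) : Prop where
  disjoint : Disjoint W₀ W₁
  sup_eq : W₀ ⊔ W₁ = U
  le_comap_right : W₀ ≤ W₁.comap N
  le_comap_left : W₁ ≤ W₀.comap N

theorem IsOddGrading.le_sup_comap {N : End R M} {U W₀ W₁ : Submodule R M}
    (h : IsOddGrading N (U.map N) W₀ W₁) : U ≤ U ⊓ W₁.comap N ⊔ U ⊓ W₀.comap N := by
  intro u hu
  obtain ⟨w₀, hw₀, w₁, hw₁, hw⟩ :=
    Submodule.mem_sup.1 (h.sup_eq.ge (Submodule.mem_map_of_mem hu))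
  obtain ⟨u₀, hu₀, rfl⟩ := h.sup_eq.le (Submodule.mem_sup_left hw₀)
  have hN : N (u - u₀) = w₁ := by rw [map_sub, ← hw, add_sub_cancel_left]
  exact Submodule.mem_sup.2 ⟨u - u₀, ⟨sub_mem hu hu₀, by simpa [hN] using hw₁⟩, u₀, ⟨hu₀, hw₀⟩,
    sub_add_cancel u u₀⟩

variable [IsSemisimpleModule R M]

theorem IsOddGrading.exists_of_map {N : End R M} {U W₀ W₁ : Submodule R M} (hU : U.map N ≤ U)
    (h : IsOddGrading N (U.map N) W₀ W₁) : ∃ V₀ V₁, IsOddGrading N U V₀ V₁ := by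
  have hW₀ : W₀ ≤ U := le_sup_left.trans (h.sup_eq.le.trans hU)
  have hW₁ : W₁ ≤ U := le_sup_right.trans (h.sup_eq.le.trans hU)
  obtain ⟨V₀, V₁, hWV₀, hV₀, hWV₁, hV₁, hd, hsup⟩ := exists_disjoint_sup_eq_sup_of_disjoint
    h.disjoint (le_inf hW₀ h.le_comap_right) (le_inf hW₁ h.le_comap_left)
  exact ⟨V₀, V₁, hd, hsup.trans (le_antisymm (sup_le inf_le_left inf_le_left) h.le_sup_comap),
    (hV₀.trans inf_le_right).trans (Submodule.comap_mono hWV₁),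
    (hV₁.trans inf_le_right).trans (Submodule.comap_mono hWV₀)⟩

theorem IsOddGrading.exists_of_le_ker_pow {N : End R M} (k : ℕ) {U : Submodule R M}
    (hU : U.map N ≤ U) (hk : U ≤ LinearMap.ker (N ^ k)) : ∃ V₀ V₁, IsOddGrading N U V₀ V₁ := by
  induction k generalizing U with
  | zero =>
    obtain rfl : U = ⊥ := by simpa [End.one_eq_id] using hk
    exact ⟨⊥, ⊥, disjoint_bot_left, sup_bot_eq ⊥, bot_le, bot_le⟩
  | succ k ih =>
    have hk' : U.map N ≤ LinearMap.ker (N ^ k) := by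
      rw [Submodule.map_le_iff_le_comap, ← LinearMap.ker_comp, ← End.mul_eq_comp, ← pow_succ]
      exact hk
    obtain ⟨W₀, W₁, h⟩ := ih (Submodule.map_mono hU) hk'
    exact h.exists_of_map hU

theorem IsSumSqZero.of_isNilpotent {N : End R M} (hN : IsNilpotent N) : IsSumSqZero 2 N := by
  obtain ⟨k, hk⟩ := hN
  obtain ⟨V₀, V₁, h⟩ := IsOddGrading.exists_of_le_ker_pow (N := N) k le_top (by simp [hk])
  have hc : IsCompl V₀ V₁ := ⟨h.disjoint, codisjoint_iff.2 h.sup_eq⟩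
  refine .of_isIdempotentElem (Submodule.isIdempotentElem_projection hc) ?_
  refine LinearMap.ext_on_codisjoint hc.codisjoint (fun x hx ↦ ?_) (fun x hx ↦ ?_)
  · have hNx : N x ∈ V₁ := h.le_comap_right hx
    simp [Submodule.projection_apply_of_mem_left hc hx,
      Submodule.projection_apply_of_mem_right hc hNx]
  · have hNx : N x ∈ V₀ := h.le_comap_left hx
    simp [Submodule.projection_apply_of_mem_right hc hx,
      Submodule.projection_apply_of_mem_left hc hNx]

end Nilpotent

section Retract

theorem isNilpotent_comp_comm {R M H : Type*} [Semiring R] [AddCommMonoid M] [Module R M]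
    [AddCommMonoid H] [Module R H] {f : M →ₗ[R] H} {g : H →ₗ[R] M} :
    IsNilpotent (f ∘ₗ g : End R H) → IsNilpotent (g ∘ₗ f : End R M) := by
  rintro ⟨k, hk⟩
  refine ⟨k + 1, ?_⟩
  have h : ((g ∘ₗ f : End R M) ^ k) ∘ₗ g = g ∘ₗ (f ∘ₗ g : End R H) ^ k :=
    End.commute_pow_left_of_commute (LinearMap.comp_assoc ..) k
  rw [pow_succ, End.mul_eq_comp, ← LinearMap.comp_assoc, h, hk, LinearMap.comp_zero,
    LinearMap.zero_comp]

variable {R M H : Type*} [Ring R] [AddCommGroup M] [Module R M] [AddCommGroup H] [Module R H]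
  {f : End R M} {ι : H →ₗ[R] M} {π : M →ₗ[R] H}

theorem exists_add_isNilpotent_of_retract (hπι : π ∘ₗ ι = .id)
    (hf : (1 - ι ∘ₗ π) * f * (1 - ι ∘ₗ π) = 0) {N₁ N₂ : End R H} (h₁ : IsNilpotent N₁)
    (h₂ : IsNilpotent N₂) (hg : π ∘ₗ f ∘ₗ ι = N₁ + N₂) :
    ∃ F₁ F₂ : End R M, IsNilpotent F₁ ∧ IsNilpotent F₂ ∧ f = F₁ + F₂ := by
  have hπι' (x : H) : π (ι x) = x := LinearMap.congr_fun hπι x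
  refine ⟨(ι ∘ₗ N₁ + (1 - ι ∘ₗ π) ∘ₗ f ∘ₗ ι) ∘ₗ π, ι ∘ₗ (N₂ ∘ₗ π + π ∘ₗ f ∘ₗ (1 - ι ∘ₗ π)),
    isNilpotent_comp_comm ?_, isNilpotent_comp_comm ?_, ?_⟩
  · convert h₁
    ext x
    simp [hπι']
  · convert h₂
    ext x
    simp [hπι']
  · have hg' : (ι ∘ₗ π) * f * (ι ∘ₗ π) = ι ∘ₗ N₁ ∘ₗ π + ι ∘ₗ N₂ ∘ₗ π := by
      rw [← LinearMap.comp_add, ← LinearMap.add_comp, ← hg]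
      rfl
    calc
      f = (ι ∘ₗ π) * f * (ι ∘ₗ π) + (1 - ι ∘ₗ π) * f * (ι ∘ₗ π) + (ι ∘ₗ π) * f * (1 - ι ∘ₗ π) +
          (1 - ι ∘ₗ π) * f * (1 - ι ∘ₗ π) := by noncomm_ring
      _ = (ι ∘ₗ N₁ ∘ₗ π + (1 - ι ∘ₗ π) * f * (ι ∘ₗ π)) +
          (ι ∘ₗ N₂ ∘ₗ π + (ι ∘ₗ π) * f * (1 - ι ∘ₗ π)) := by rw [hf, hg', add_zero]; abel
      _ = _ := by rw [LinearMap.add_comp, LinearMap.comp_add]; rfl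

theorem trace_retract {R M H : Type*} [CommRing R] [AddCommGroup M] [Module R M] [Module.Free R M]
    [Module.Finite R M] [AddCommGroup H] [Module R H] [Module.Free R H] [Module.Finite R H]
    {f : End R M} {ι : H →ₗ[R] M} {π : M →ₗ[R] H} (hπι : π ∘ₗ ι = .id)
    (hf : (1 - ι ∘ₗ π) * f * (1 - ι ∘ₗ π) = 0) :
    LinearMap.trace R H (π ∘ₗ f ∘ₗ ι) = LinearMap.trace R M f := by
  have he : IsIdempotentElem (1 - ι ∘ₗ π : End R M) := by
    refine IsIdempotentElem.one_sub (LinearMap.ext fun x ↦ ?_)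
    exact congrArg ι (LinearMap.congr_fun hπι (π x))
  have hf' : LinearMap.trace R M ((1 - ι ∘ₗ π) * f) = 0 := by
    rw [← he.eq, mul_assoc, LinearMap.trace_mul_comm, hf, map_zero]
  calc
    LinearMap.trace R H (π ∘ₗ f ∘ₗ ι) = LinearMap.trace R M ((ι ∘ₗ π) * f) :=
      LinearMap.trace_comp_comm' ι (π ∘ₗ f)
    _ = LinearMap.trace R M f := by
      rw [← sub_eq_zero, ← map_sub, ← neg_eq_zero, ← map_neg, neg_sub, ← hf', sub_mul, one_mul]

end Retract

section NonScalar

variable {F V : Type*} [Field F] [AddCommGroup V] [Module F V] {f : End F V}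

theorem exists_notMem_span_pair_of_forall_ne_smul_one (hf : ∀ c : F, f ≠ c • 1) :
    ∃ v x, v ∉ Submodule.span F {f v, x} ∧
      (finrank F V ≤ 2 ∨ f x ∉ Submodule.span F {v, x}) := by
  obtain ⟨v, hv⟩ : ∃ v, LinearIndependent F ![v, f v] := by
    by_contra! h
    obtain ⟨c, hc⟩ := f.exists_eq_smul_id_of_forall_notLinearIndependent h
    exact hf c hc
  obtain hV | hV := le_or_gt (finrank F V) 2
  · exact ⟨v, f v, by simpa [Set.image] using hv.notMem_span 0, .inl hV⟩
  obtain ⟨y, hy⟩ := exists_linearIndependent_cons_of_lt_finrank hv hV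
  have hind {a b c : F} (h : a • y + b • v + c • f v = 0) : a = 0 ∧ b = 0 ∧ c = 0 := by
    have := Fintype.linearIndependent_iff.1 hy ![a, b, c]
      (by simpa [Fin.sum_univ_three, add_assoc] using h)
    exact ⟨this 0, this 1, this 2⟩
  have hvy (t : F) : v ∉ Submodule.span F {f v, y + t • v} := by
    rw [Submodule.mem_span_pair]
    rintro ⟨a, b, hab⟩
    obtain ⟨rfl, hb, -⟩ := hind (a := b) (b := b * t - 1) (c := a)
      (by linear_combination (norm := module) hab)
    simp at hb
  by_contra! h
  obtain ⟨a, b, hab⟩ := Submodule.mem_span_pair.1 (h v _ (hvy 0)).2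
  obtain ⟨c, d, hcd⟩ := Submodule.mem_span_pair.1 (h v _ (hvy 1)).2
  rw [map_add, map_smul] at hab hcd
  obtain ⟨-, -, h10⟩ := hind (a := d - b) (b := c + d - a) (c := -1)
    (by linear_combination (norm := module) hcd - hab)
  simp at h10

theorem exists_isCompl_span_singleton_of_forall_ne_smul_one (hf : ∀ c : F, f ≠ c • 1) :
    ∃ (v : V) (H : Submodule F V) (hc : IsCompl H (F ∙ v)), v ≠ 0 ∧ f v ∈ H ∧
      (finrank F V ≤ 2 ∨ ∀ c : F, H.projectionOnto (F ∙ v) hc ∘ₗ f ∘ₗ H.subtype ≠ c • 1) := by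
  obtain ⟨v, x, hv, hx⟩ := exists_notMem_span_pair_of_forall_ne_smul_one hf
  have hd : Disjoint (Submodule.span F {f v, x}) (F ∙ v) :=
    Submodule.disjoint_span_singleton.2 fun h ↦ (hv h).elim
  obtain ⟨H, hH, hc⟩ := hd.exists_isCompl
  have hxH : x ∈ H := hH (Submodule.mem_span_of_mem (by simp))
  refine ⟨v, H, hc, by rintro rfl; simp at hv, hH (Submodule.mem_span_of_mem (by simp)),
    hx.imp_right fun hx c hg ↦ hx ?_⟩
  have hgx : H.projection (F ∙ v) hc (f x) = c • x :=
    congrArg Subtype.val (LinearMap.congr_fun hg ⟨x, hxH⟩)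
  obtain ⟨a, ha⟩ := Submodule.mem_span_singleton.1 (Submodule.sub_projection_mem hc (f x))
  exact Submodule.mem_span_pair.2 ⟨a, c, by rw [ha, hgx, sub_add_cancel]⟩

theorem eq_zero_of_trace_eq_zero_of_finrank_le_one [FiniteDimensional F V]
    (htr : LinearMap.trace F V f = 0) (hV : finrank F V ≤ 1) : f = 0 := by
  obtain ⟨c, rfl⟩ : ∃ c : F, f = c • 1 := by
    refine f.exists_eq_smul_id_of_forall_notLinearIndependent fun v hv ↦ ?_
    simpa using hv.fintype_card_le_finrank.trans hV
  obtain hV | hV : finrank F V = 0 ∨ finrank F V = 1 := by lia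
  · have := finrank_zero_iff.1 hV
    exact Subsingleton.elim _ _
  · obtain rfl : c = 0 := by simpa [hV] using htr
    exact zero_smul F 1

theorem exists_add_isNilpotent_of_trace_eq_zero [FiniteDimensional F V]
    (htr : LinearMap.trace F V f = 0) (hf : ∀ c : F, f = c • 1 → f = 0) :
    ∃ N₁ N₂ : End F V, IsNilpotent N₁ ∧ IsNilpotent N₂ ∧ f = N₁ + N₂ := by
  induction h : finrank F V using Nat.strong_induction_on generalizing V with
  | _ d ih =>
    subst h
    by_cases hf₀ : f = 0
    · exact ⟨0, 0, .zero, .zero, by simp [hf₀]⟩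
    obtain ⟨v, H, hc, hv, hfv, hH⟩ := exists_isCompl_span_singleton_of_forall_ne_smul_one
      (f := f) fun c hc ↦ hf₀ (hf c hc)
    have hfin : finrank F H + 1 = finrank F V := by
      rw [← Submodule.finrank_add_eq_of_isCompl hc, finrank_span_singleton hv]
    have hπι := Submodule.projectionOnto_comp_subtype hc
    have hcorner : (1 - H.subtype ∘ₗ H.projectionOnto _ hc) * f *
        (1 - H.subtype ∘ₗ H.projectionOnto _ hc) = 0 := by
      ext x
      obtain ⟨a, ha⟩ := Submodule.mem_span_singleton.1 (Submodule.sub_projection_mem hc x)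
      have hfix : H.projection _ hc (f v) = f v := Submodule.projection_apply_of_mem_left hc hfv
      change f (x - H.projection _ hc x) - H.projection _ hc (f (x - H.projection _ hc x)) = 0
      rw [← ha, map_smul, map_smul, hfix, sub_self]
    have htr' := (trace_retract hπι hcorner).trans htr
    obtain ⟨N₁, N₂, h₁, h₂, hg⟩ := ih (finrank F H) (by lia) htr' (fun c hgc ↦ hH.elim
      (fun hV ↦ eq_zero_of_trace_eq_zero_of_finrank_le_one htr' (by lia))
      (fun hne ↦ (hne c hgc).elim)) rfl
    exact exists_add_isNilpotent_of_retract hπι hcorner h₁ h₂ hg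

end NonScalar

section Scalar

open Matrix

theorem permMatrix_mul_diagonal {ι R : Type*} [Fintype ι] [DecidableEq ι] [Semiring R]
    (σ : Equiv.Perm ι) (d : ι → R) :
    σ.permMatrix R * diagonal d = diagonal (d ∘ σ) * σ.permMatrix R := by
  ext i j
  by_cases h : σ i = j <;> simp [h]

theorem permMatrix_mul_self_of_involutive {ι R : Type*} [Fintype ι] [DecidableEq ι] [Semiring R]
    {σ : Equiv.Perm ι} (hσ : Function.Involutive σ) : σ.permMatrix R * σ.permMatrix R = 1 := by
  rw [← permMatrix_mul, (Equiv.ext hσ : σ * σ = 1), permMatrix_one]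

theorem isSumSqZero_diagonal {ι R : Type*} [Fintype ι] [DecidableEq ι] [Ring R]
    [Invertible (2 : Matrix ι ι R)] {σ : Equiv.Perm ι} (hσ : Function.Involutive σ) {d : ι → R}
    (hd : ∀ i, d (σ i) = -d i) : IsSumSqZero 2 (diagonal d) := by
  refine .of_anticommute (permMatrix_mul_self_of_involutive hσ) ?_
  rw [permMatrix_mul_diagonal, (funext hd : d ∘ σ = -d), ← neg_mul, diagonal_neg]
  rfl

variable {R : Type*} [Ring R] {n : ℕ} [NeZero n]

theorem isSumSqZero_one_of_invertible_two [Invertible (2 : R)] (hn : (n : R) = 0) :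
    IsSumSqZero 4 (1 : Matrix (ZMod n) (ZMod n) R) := by
  have : Invertible (2 : Matrix (ZMod n) (ZMod n) R) :=
    (Invertible.map (scalar (ZMod n)) (2 : R)).copy _ (map_ofNat _ 2).symm
  let e : ZMod n →+* R := ZMod.castHom (ringChar.dvd hn) R
  have hsum : (1 : Matrix (ZMod n) (ZMod n) R) = diagonal e + diagonal (fun i ↦ 1 - e i) := by
    simp [diagonal_add]
  rw [hsum]
  refine (isSumSqZero_diagonal (σ := .neg _) neg_neg fun i ↦ map_neg e i).add
    (isSumSqZero_diagonal (σ := .subLeft 2) (sub_sub_cancel 2) fun i ↦ ?_)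
  rw [Equiv.subLeft_apply, map_sub, map_ofNat, ← one_add_one_eq_two]
  abel

theorem isSumSqZero_one_of_two_eq_zero (h2 : (2 : R) = 0) (hn : (n : R) = 0) :
    IsSumSqZero 4 (1 : Matrix (ZMod n) (ZMod n) R) := by
  let e : ZMod n →+* R := ZMod.castHom (ringChar.dvd hn) R
  let σ : Equiv.Perm (ZMod n) := .subLeft 1
  let S := σ.permMatrix R
  have hS : S * S = 1 := permMatrix_mul_self_of_involutive (sub_sub_cancel (1 : ZMod n))
  have hSS : S + S = 0 := by rw [← two_smul R, h2, zero_smul]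
  have hidem : IsIdempotentElem (diagonal e) := by
    refine (diagonal_mul_diagonal _ _).trans (congrArg diagonal (funext fun i ↦ ?_))
    obtain ⟨k, rfl⟩ := ZMod.intCast_surjective i
    rw [map_intCast]
    obtain ⟨m, rfl | rfl⟩ := k.even_or_odd' <;> simp [h2]
  have hSe : S * diagonal e = (1 - diagonal e) * S := by
    have hσ : 1 - diagonal e = diagonal (e ∘ σ) := by
      rw [← diagonal_one, diagonal_sub]
      simp [Function.comp_def, σ]
    rw [hσ]
    exact permMatrix_mul_diagonal σ e
  have hS₂ : IsSumSqZero 2 S :=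
    .of_isIdempotentElem hidem (by rw [hSe, ← add_mul, add_sub_cancel, one_mul])
  have hS₁ : (1 + S) ^ 2 = 0 := calc
    (1 + S) ^ 2 = 1 + S * S + (S + S) := by noncomm_ring
    _ = 0 := by rw [hS, hSS, add_zero, ← two_smul R, h2, zero_smul]
  have hsum : 1 = 1 + S + 0 + S := by rw [add_zero, add_assoc, hSS, add_zero]
  rw [hsum]
  exact ((IsSumSqZero.of_sq_eq_zero hS₁).add (.of_sq_eq_zero (zero_pow two_ne_zero))).add hS₂

theorem isSumSqZero_one_of_finrank_eq_zero {F V : Type*} [Field F] [AddCommGroup V] [Module F V]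
    [FiniteDimensional F V] (hV : (finrank F V : F) = 0) : IsSumSqZero 4 (1 : End F V) := by
  obtain hzero | hpos := (finrank F V).eq_zero_or_pos
  · have := finrank_zero_iff.1 hzero
    exact ⟨0, by simp, Subsingleton.elim _ _⟩
  have : NeZero (finrank F V) := .of_pos hpos
  let b : Basis (ZMod (finrank F V)) F V := (finBasis F V).reindex (ZMod.finEquiv _).toEquiv
  rw [← map_one (toLinAlgEquiv b)]
  refine .map (toLinAlgEquiv b).toRingHom ?_
  obtain h2 | h2 := eq_or_ne (2 : F) 0
  · exact isSumSqZero_one_of_two_eq_zero h2 hV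
  · have := invertibleOfNonzero h2
    exact isSumSqZero_one_of_invertible_two hV

end Scalar

theorem IsSumSqZero.of_trace_eq_zero {F V : Type*} [Field F] [AddCommGroup V] [Module F V]
    [FiniteDimensional F V] {f : End F V} (htr : LinearMap.trace F V f = 0) :
    IsSumSqZero 4 f := by
  by_cases hf : ∀ c : F, f = c • 1 → f = 0
  · obtain ⟨N₁, N₂, h₁, h₂, rfl⟩ := exists_add_isNilpotent_of_trace_eq_zero htr hf
    exact (of_isNilpotent h₁).add (of_isNilpotent h₂)
  · push Not at hf
    obtain ⟨c, rfl, hc⟩ := hf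
    have hc₀ : c ≠ 0 := by rintro rfl; simp at hc
    exact (isSumSqZero_one_of_finrank_eq_zero (by simpa [hc₀] using htr)).smul c

theorem stmt_13_general {n F : Type*} [Fintype n] [DecidableEq n] [Field F] (A : Matrix n n F)
    (hA : A.trace = 0) :
    ∃ B₁ B₂ B₃ B₄ : Matrix n n F,
      B₁ ^ 2 = 0 ∧ B₂ ^ 2 = 0 ∧ B₃ ^ 2 = 0 ∧ B₄ ^ 2 = 0 ∧ A = B₁ + B₂ + B₃ + B₄ := by
  have hf : IsSumSqZero 4 (Matrix.toLinAlgEquiv' A) :=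
    .of_trace_eq_zero ((Matrix.trace_toLin'_eq A).trans hA)
  obtain ⟨B, hB, hAB⟩ := hf.map (LinearMap.toMatrixAlgEquiv' : End F (n → F) ≃ₐ[F] _).toRingHom
  refine ⟨B 0, B 1, B 2, B 3, hB 0, hB 1, hB 2, hB 3, ?_⟩
  rw [← Fin.sum_univ_four, ← hAB]
  exact (LinearMap.toMatrixAlgEquiv'_toLinAlgEquiv' A).symm

/-- Every trace-zero matrix over `ℤ/ℓℤ` (`ℓ` prime) is a sum of four
square-zero matrices. -/
theorem stmt_13 (n ℓ : ℕ) (hℓ : ℓ.Prime) (A : Matrix (Fin n) (Fin n) (ZMod ℓ))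
    (hA : Matrix.trace A = 0) :
    ∃ B₁ B₂ B₃ B₄ : Matrix (Fin n) (Fin n) (ZMod ℓ),
      B₁ ^ 2 = 0 ∧ B₂ ^ 2 = 0 ∧ B₃ ^ 2 = 0 ∧ B₄ ^ 2 = 0 ∧ A = B₁ + B₂ + B₃ + B₄ := by
  have : Fact ℓ.Prime := ⟨hℓ⟩
  exact stmt_13_general A hA
end
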